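/- arXiv:2111.05165 — 3 statements merged into one kernel-verified Lean document; each statement's English description precedes it below -/
import Mathlib

section
/- Let G and Ω be domains in ℂ with Ω not simply connected (Ω has at least one hole). Let K ⊆ G be a G-convex compact set, L ⊆ Ω an Ω-convex compact set, and φ a holomorphic map from G to Ω. Suppose there exist compact sets K' ∈ M(G) with K ⊆ K' and L' ∈ M(Ω) with L ⊆ L' such that φ is injective on a neighbourhood of K', φ(K') ∩ L' = ∅, and φ(K') ∪ L' is Ω-convex. Then φ is injective on a neighbourhood of K, φ(K) ∩ L = ∅, and φ(K) ∪ L is Ω-convex. -/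
open Set Metric Bornology Filter

/-- A *hole* of `E` is a nonempty bounded connected component of `ℂ \ E`. -/
def IsHole (E C : Set ℂ) : Prop :=
  (∃ z ∈ Eᶜ, C = connectedComponentIn Eᶜ z) ∧ Bornology.IsBounded C

/-- A compact set `K` contained in an open set `Ω` is `Ω`-*convex* if every hole of `K`
contains a point of `ℂ \ Ω`. -/
def OmegaConvex (Ω K : Set ℂ) : Prop :=
  ∀ C : Set ℂ, IsHole K C → (C ∩ Ωᶜ).Nonempty

/-- The *polynomial hull* of `K`: the union of `K` and all of its holes. -/
def polyHull (K : Set ℂ) : Set ℂ :=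
  K ∪ {z | z ∈ Kᶜ ∧ Bornology.IsBounded (connectedComponentIn Kᶜ z)}

/-- A sequence of maps is *eventually injective* on `G`: for every compact `K ⊆ G`, the maps
are eventually injective on a neighbourhood of `K` in `G`. -/
def EventuallyInjective (G : Set ℂ) (φ : ℕ → ℂ → ℂ) : Prop :=
  ∀ K : Set ℂ, K ⊆ G → IsCompact K →
    ∃ N : ℕ, ∀ n ≥ N, ∃ U : Set ℂ, IsOpen U ∧ K ⊆ U ∧ U ⊆ G ∧ Set.InjOn (φ n) U

/-- `f` is `(Φ, G, Ω)`-*universal*: the family `{f ∘ φ n : n ∈ ℕ}` is dense in `H(G)` for the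
topology of locally uniform convergence, i.e. every `g` holomorphic on `G` can be approximated
uniformly on every compact subset of `G` by functions `f ∘ φ n`. -/
def UniversalFor (G : Set ℂ) (φ : ℕ → ℂ → ℂ) (f : ℂ → ℂ) : Prop :=
  ∀ g : ℂ → ℂ, DifferentiableOn ℂ g G →
    ∀ K : Set ℂ, K ⊆ G → IsCompact K → ∀ ε : ℝ, 0 < ε →
      ∃ n : ℕ, ∀ z ∈ K, ‖f (φ n z) - g z‖ < ε

/-- `E` has no hole (for a domain: simple connectivity). -/
def HasNoHole (E : Set ℂ) : Prop := ¬ ∃ C : Set ℂ, IsHole E C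

/-- A *Jordan curve*: the image of the unit circle under an injective continuous map. -/
def IsJordanCurve (C : Set ℂ) : Prop :=
  ∃ γ : ℂ → ℂ, ContinuousOn γ (Metric.sphere 0 1) ∧ Set.InjOn γ (Metric.sphere 0 1) ∧
    C = γ '' Metric.sphere 0 1

/-- A *Jordan arc*: the image of `[0,1]` under an injective continuous map. -/
def IsJordanArc (C : Set ℂ) : Prop :=
  ∃ γ : ℝ → ℂ, ContinuousOn γ (Set.Icc 0 1) ∧ Set.InjOn γ (Set.Icc 0 1) ∧
    C = γ '' Set.Icc 0 1

/-- A compact set is *regular* if its boundary is a union of Jordan curves. -/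
def RegularCompact (K : Set ℂ) : Prop :=
  ∃ 𝒞 : Set (Set ℂ), (∀ C ∈ 𝒞, IsJordanCurve C) ∧ frontier K = ⋃₀ 𝒞

/-- `K` is `Ω`-*connected*: it has no hole if `Ω` is simply connected, and has at least one hole
if `Ω` is not simply connected. -/
def OmegaConnectedSet (Ω K : Set ℂ) : Prop :=
  (HasNoHole Ω → HasNoHole K) ∧ (¬ HasNoHole Ω → ∃ C : Set ℂ, IsHole K C)

/-- Membership in the family `M(Ω)` of nonempty compact subsets of `Ω` that are regular,
connected, `Ω`-connected and `Ω`-convex. -/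
def MemM (Ω K : Set ℂ) : Prop :=
  K.Nonempty ∧ IsCompact K ∧ K ⊆ Ω ∧ RegularCompact K ∧ IsConnected K ∧
    OmegaConnectedSet Ω K ∧ OmegaConvex Ω K

/-- `f` is `(Φ, M)`-*universal*: for every `K ∈ M`, the restrictions of the `f ∘ φ n` to `K`
are dense in `C(K)`. -/
def MUniversal (M : Set (Set ℂ)) (φ : ℕ → ℂ → ℂ) (f : ℂ → ℂ) : Prop :=
  ∀ K ∈ M, ∀ h : ℂ → ℂ, ContinuousOn h K → ∀ ε : ℝ, 0 < ε →
    ∃ n : ℕ, ∀ z ∈ K, ‖f (φ n z) - h z‖ < ε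

/-!
Enlarging a compact set can destroy one of its holes only by covering it entirely: a hole of
`φ(K) ∪ L` that is not contained in `φ(K') ∪ L'` contains a hole of the latter, hence a point
outside `Ω`. A hole that is contained in `φ(K') ∪ L'` lies in one of these two disjoint compact
sets, by connectedness, and is then a hole of `φ(K)` alone or of `L` alone. Inside `L' ⊆ Ω` there
is no hole of `L`, since `L` is `Ω`-convex; a hole of `φ(K)` inside `φ(K')` would be carried by the
inverse of `φ` to a hole of `K` inside `K' ⊆ G`, contradicting the `G`-convexity of `K`.
-/

section Topology

variable {X Y : Type*} [TopologicalSpace X] [TopologicalSpace Y]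

theorem subset_of_isPreconnected_of_disjoint_frontier {s t : Set X} (ht : IsPreconnected t)
    (hts : (t ∩ s).Nonempty) (hdisj : Disjoint t (frontier s)) : t ⊆ s := by
  have hcover : t ⊆ interior s ∪ interior sᶜ := by
    rw [← compl_frontier_eq_union_interior]
    exact hdisj.subset_compl_right
  obtain ⟨x, hxt, hxs⟩ := hts
  have hx : x ∈ interior s :=
    (hcover hxt).resolve_right fun h ↦ interior_subset h hxs
  have hint : Disjoint (interior s) (interior sᶜ) :=
    disjoint_compl_right.mono interior_subset interior_subset
  exact (ht.subset_left_of_subset_union isOpen_interior isOpen_interior hint hcover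
    ⟨x, hxt, hx⟩).trans interior_subset

theorem isConnected_inter_preimage_of_isCompact_of_injOn [T2Space Y] {f : X → Y} {s : Set X}
    {t : Set Y} (hs : IsCompact s) (hf : ContinuousOn f s) (hinj : InjOn f s)
    (ht : IsConnected t) (hts : t ⊆ f '' s) : IsConnected (s ∩ f ⁻¹' t) := by
  have : CompactSpace s := isCompact_iff_compactSpace.mp hs
  have hpre : IsConnected (s.domRestrict f ⁻¹' t) :=
    ht.preimage_of_isClosedMap (injOn_iff_injective.mp hinj) hf.domRestrict.isClosedMap
      (by rwa [range_domRestrict])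
  rw [← Subtype.image_preimage_coe]
  exact hpre.image _ continuous_subtype_val.continuousOn

theorem isOpen_inter_preimage_of_injOn {f : X → Y} {s u : Set X} {t : Set Y} (hu : IsOpen u)
    (hsu : s ⊆ u) (hf : ContinuousOn f u) (hinj : InjOn f u) (ht : IsOpen t)
    (hts : t ⊆ f '' s) : IsOpen (s ∩ f ⁻¹' t) := by
  have heq : s ∩ f ⁻¹' t = u ∩ f ⁻¹' t := by
    refine subset_antisymm (inter_subset_inter_left _ hsu) ?_
    rintro x ⟨hxu, hxt⟩
    exact ⟨(hinj.mem_image_iff hsu hxu).mp (hts hxt), hxt⟩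
  rw [heq]
  exact hf.isOpen_inter_preimage hu ht

end Topology

namespace IsHole

variable {E C : Set ℂ}

theorem isConnected (hC : IsHole E C) : IsConnected C := by
  obtain ⟨⟨z, hz, rfl⟩, -⟩ := hC
  exact isConnected_connectedComponentIn_iff.mpr hz

theorem isBounded (hC : IsHole E C) : IsBounded C := hC.2

theorem disjoint (hC : IsHole E C) : Disjoint C E := by
  obtain ⟨⟨z, -, rfl⟩, -⟩ := hC
  exact disjoint_left.mpr (connectedComponentIn_subset Eᶜ z)

theorem isOpen (hC : IsHole E C) (hE : IsClosed E) : IsOpen C := by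
  obtain ⟨⟨z, -, rfl⟩, -⟩ := hC
  exact hE.isOpen_compl.connectedComponentIn

theorem eq_connectedComponentIn (hC : IsHole E C) {z : ℂ} (hz : z ∈ C) :
    C = connectedComponentIn Eᶜ z := by
  obtain ⟨⟨w, -, rfl⟩, -⟩ := hC
  exact connectedComponentIn_eq hz

theorem frontier_subset (hC : IsHole E C) (hE : IsClosed E) : frontier C ⊆ E := by
  rw [(hC.isOpen hE).frontier_eq]
  rintro w ⟨hw, hwC⟩
  by_contra hwE
  obtain ⟨z, hz⟩ := hC.isConnected.nonempty
  have hins : IsPreconnected (insert w C) :=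
    hC.isConnected.isPreconnected.subset_closure (subset_insert w C)
      (insert_subset hw subset_closure)
  have hsub : insert w C ⊆ connectedComponentIn Eᶜ z :=
    hins.subset_connectedComponentIn (mem_insert_of_mem w hz)
      (insert_subset hwE hC.disjoint.subset_compl_right)
  rw [← hC.eq_connectedComponentIn hz] at hsub
  exact hwC (hsub (mem_insert w C))

theorem of_frontier_subset (hconn : IsConnected C) (hbdd : IsBounded C) (hdisj : Disjoint C E)
    (hfr : frontier C ⊆ E) : IsHole E C := by
  obtain ⟨z, hz⟩ := hconn.nonempty
  have hCE : C ⊆ Eᶜ := hdisj.subset_compl_right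
  refine ⟨⟨z, hCE hz, subset_antisymm
    (hconn.isPreconnected.subset_connectedComponentIn hz hCE) ?_⟩, hbdd⟩
  exact subset_of_isPreconnected_of_disjoint_frontier isPreconnected_connectedComponentIn
    ⟨z, mem_connectedComponentIn (hCE hz), hz⟩
    ((disjoint_compl_left_iff_subset.mpr hfr).mono_left (connectedComponentIn_subset Eᶜ z))

theorem of_union {A B F : Set ℂ} (hC : IsHole (A ∪ B) C) (hAB : IsClosed (A ∪ B))
    (hF : IsClosed F) (hCF : C ⊆ F) (hFB : Disjoint F B) : IsHole A C := by
  refine of_frontier_subset hC.isConnected hC.isBounded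
    (hC.disjoint.mono_right subset_union_left) fun w hw ↦ ?_
  have hwF : w ∈ F := closure_minimal hCF hF (frontier_subset_closure hw)
  exact (hC.frontier_subset hAB hw).resolve_right (disjoint_left.mp hFB hwF)

theorem exists_subset_of_not_subset {E' : Set ℂ} (hC : IsHole E C) (hEE' : E ⊆ E')
    (hCE' : ¬ C ⊆ E') : ∃ C' ⊆ C, IsHole E' C' := by
  obtain ⟨w, hwC, hwE'⟩ := not_subset.mp hCE'
  have hsub : connectedComponentIn E'ᶜ w ⊆ C := by
    rw [hC.eq_connectedComponentIn hwC]
    exact connectedComponentIn_mono w (compl_subset_compl.mpr hEE')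
  exact ⟨_, hsub, ⟨w, hwE', rfl⟩, hC.isBounded.subset hsub⟩

theorem preimage_of_injOn {φ : ℂ → ℂ} {K K' U : Set ℂ} (hC : IsHole (φ '' K) C)
    (hK : IsCompact K) (hK' : IsCompact K') (hKK' : K ⊆ K') (hU : IsOpen U) (hK'U : K' ⊆ U)
    (hφ : ContinuousOn φ U) (hinj : InjOn φ U) (hCK' : C ⊆ φ '' K') :
    IsHole K (K' ∩ φ ⁻¹' C) := by
  have hKU : K ⊆ U := hKK'.trans hK'U
  have hφK : IsClosed (φ '' K) := (hK.image_of_continuousOn (hφ.mono hKU)).isClosed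
  have hopen : IsOpen (K' ∩ φ ⁻¹' C) :=
    isOpen_inter_preimage_of_injOn hU hK'U hφ hinj (hC.isOpen hφK) hCK'
  refine of_frontier_subset
    (isConnected_inter_preimage_of_isCompact_of_injOn hK' (hφ.mono hK'U) (hinj.mono hK'U)
      hC.isConnected hCK')
    (hK'.isBounded.subset inter_subset_left)
    (disjoint_left.mpr fun w hw hwK ↦ disjoint_left.mp hC.disjoint hw.2 (mem_image_of_mem φ hwK))
    ?_
  rw [hopen.frontier_eq]
  rintro w ⟨hw, hwD⟩
  have hwK' : w ∈ K' := closure_minimal inter_subset_left hK'.isClosed hw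
  have hφw : φ w ∈ closure C :=
    ((hφ w (hK'U hwK')).mono (inter_subset_left.trans hK'U)).mem_closure hw fun _ hv ↦ hv.2
  have hφwK : φ w ∈ φ '' K := by
    apply hC.frontier_subset hφK
    rw [(hC.isOpen hφK).frontier_eq]
    exact ⟨hφw, fun h ↦ hwD ⟨hwK', h⟩⟩
  exact (hinj.mem_image_iff hKU (hK'U hwK')).mp hφwK

end IsHole

namespace OmegaConvex

variable {Ω : Set ℂ}

theorem not_subset_of_isHole {K C : Set ℂ} (hK : OmegaConvex Ω K) (hC : IsHole K C) :
    ¬ C ⊆ Ω :=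
  inter_compl_nonempty_iff.mp (hK C hC)

theorem union_of_subset {A B A' B' : Set ℂ} (h : OmegaConvex Ω (A' ∪ B'))
    (hA : IsClosed A) (hB : IsClosed B) (hA' : IsClosed A') (hB' : IsClosed B')
    (hAA' : A ⊆ A') (hBB' : B ⊆ B') (hdisj : Disjoint A' B')
    (hAhole : ∀ C, IsHole A C → ¬ C ⊆ A') (hBhole : ∀ C, IsHole B C → ¬ C ⊆ B') :
    OmegaConvex Ω (A ∪ B) := by
  intro C hC
  by_cases hsub : C ⊆ A' ∪ B'
  · exfalso
    have hAB : IsClosed (A ∪ B) := hA.union hB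
    have hcases : C ⊆ A' ∨ C ⊆ B' :=
      isPreconnected_iff_subset_of_disjoint_closed.mp hC.isConnected.isPreconnected A' B' hA' hB'
        hsub (by rw [hdisj.inter_eq, inter_empty])
    rcases hcases with hCA' | hCB'
    · exact hAhole C (hC.of_union hAB hA' hCA' (hdisj.mono_right hBB')) hCA'
    · rw [union_comm] at hC hAB
      exact hBhole C (hC.of_union hAB hB' hCB' (hdisj.symm.mono_right hAA')) hCB'
  · obtain ⟨C', hC'C, hC'⟩ :=
      hC.exists_subset_of_not_subset (union_subset_union hAA' hBB') hsub
    exact (h C' hC').mono (inter_subset_inter_left Ωᶜ hC'C)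

end OmegaConvex

theorem omegaConvex_union_of_memM_witnesses_general {G Ω K L K' L' : Set ℂ} {φ : ℂ → ℂ}
    (hK : IsCompact K) (hKconv : OmegaConvex G K) (hL : IsClosed L) (hLconv : OmegaConvex Ω L)
    (hφ : ContinuousOn φ G) (hK' : IsCompact K') (hKK' : K ⊆ K') (hL' : IsClosed L')
    (hL'Ω : L' ⊆ Ω) (hLL' : L ⊆ L')
    (hinj : ∃ U : Set ℂ, IsOpen U ∧ K' ⊆ U ∧ U ⊆ G ∧ InjOn φ U)
    (hdisj : (φ '' K') ∩ L' = ∅) (hconv : OmegaConvex Ω ((φ '' K') ∪ L')) :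
    (∃ U : Set ℂ, IsOpen U ∧ K ⊆ U ∧ U ⊆ G ∧ InjOn φ U) ∧
      (φ '' K) ∩ L = ∅ ∧ OmegaConvex Ω ((φ '' K) ∪ L) := by
  obtain ⟨U, hU, hK'U, hUG, hφinj⟩ := hinj
  have hφU : ContinuousOn φ U := hφ.mono hUG
  have hφKK' : φ '' K ⊆ φ '' K' := image_mono hKK'
  have hφK' : IsClosed (φ '' K') := (hK'.image_of_continuousOn (hφU.mono hK'U)).isClosed
  have hφK : IsClosed (φ '' K) :=
    (hK.image_of_continuousOn (hφU.mono (hKK'.trans hK'U))).isClosed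
  have hdisj' : Disjoint (φ '' K') L' := disjoint_iff_inter_eq_empty.mpr hdisj
  have hKhole (C : Set ℂ) (hC : IsHole (φ '' K) C) : ¬ C ⊆ φ '' K' := fun hCK' ↦
    hKconv.not_subset_of_isHole
      (hC.preimage_of_injOn hK hK' hKK' hU hK'U hφU hφinj hCK')
      (inter_subset_left.trans (hK'U.trans hUG))
  have hLhole (C : Set ℂ) (hC : IsHole L C) : ¬ C ⊆ L' := fun hCL' ↦
    hLconv.not_subset_of_isHole hC (hCL'.trans hL'Ω)
  exact ⟨⟨U, hU, hKK'.trans hK'U, hUG, hφinj⟩,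
    disjoint_iff_inter_eq_empty.mp (hdisj'.mono hφKK' hLL'),
    hconv.union_of_subset hφK hL hφK' hL' hφKK' hLL' hdisj' hKhole hLhole⟩

/-- Lemma `lemme-tout-compact`. -/
theorem omegaConvex_union_of_memM_witnesses
    (G Ω : Set ℂ) (hG : IsOpen G) (hGconn : IsConnected G)
    (hΩ : IsOpen Ω) (hΩconn : IsConnected Ω) (hΩnsc : ¬ HasNoHole Ω)
    (K L : Set ℂ) (hK : IsCompact K) (hKG : K ⊆ G) (hKconv : OmegaConvex G K)
    (hL : IsCompact L) (hLΩ : L ⊆ Ω) (hLconv : OmegaConvex Ω L)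
    (φ : ℂ → ℂ) (hφd : DifferentiableOn ℂ φ G) (hφm : Set.MapsTo φ G Ω)
    (K' L' : Set ℂ) (hK' : MemM G K') (hKK' : K ⊆ K') (hL' : MemM Ω L') (hLL' : L ⊆ L')
    (hinj : ∃ U : Set ℂ, IsOpen U ∧ K' ⊆ U ∧ U ⊆ G ∧ Set.InjOn φ U)
    (hdisj : (φ '' K') ∩ L' = ∅) (hconv : OmegaConvex Ω ((φ '' K') ∪ L')) :
    (∃ U : Set ℂ, IsOpen U ∧ K ⊆ U ∧ U ⊆ G ∧ Set.InjOn φ U) ∧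
      (φ '' K) ∩ L = ∅ ∧ OmegaConvex Ω ((φ '' K) ∪ L) := by
  obtain ⟨-, hK'c, -⟩ := hK'
  obtain ⟨-, hL'c, hL'Ω, -⟩ := hL'
  exact omegaConvex_union_of_memM_witnesses_general hK hKconv hL.isClosed hLconv hφd.continuousOn
    hK'c hKK' hL'c.isClosed hL'Ω hLL' hinj hdisj hconv
end

section
/- Let G ⊆ ℂ be a bounded domain. Then there exist a domain Ω ⊆ ℂ, a complex number a, and a strictly increasing sequence (kₙ) of positive integers such that the maps φₙ(z) := (z + a)/kₙ form a sequence of injective holomorphic maps from G to Ω for which there exists a ((φₙ),G,Ω)-universal function. -/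
open Set Metric Bornology Filter

/-!
The fixed points of the scalings `z ↦ c z` are `0` and `∞`. If `F` vanishes at both, then
`z ↦ F (k z)` is large only where `|z|` is comparable to `1 / k`, so functions `F m` placed at
scales `1 / k m` with `k m` growing fast enough do not interact: `f z = ∑ F m (k m z)` satisfies
`f (ζ / k n) ≈ F n ζ` for `ζ` in a fixed annulus. After a translation `G` lies in such an annulus,
and it remains to let `F m` run through a sequence dense in `H(G)`. By Runge's theorem with poles on
the boundary of `G` these functions may be chosen with finitely many singularities, none in `G`.
Thus `f` is holomorphic off a closed countable set, whose complement is connected even when `G` has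
holes.
-/

section CauchyPompeiu

open MeasureTheory Complex
open scoped Topology Real

/-- The Wirtinger derivative `∂u/∂z̄`, written with the real Fréchet derivative of `u`. -/
noncomputable def dbar (u : ℂ → ℂ) (w : ℂ) : ℂ :=
  (fderiv ℝ u w 1 + I * fderiv ℝ u w I) / 2

lemma dbar_eq_zero_of_differentiableAt {u : ℂ → ℂ} {w : ℂ} (hu : DifferentiableAt ℂ u w) :
    dbar u w = 0 := by
  have hI : fderiv ℝ u w I = I * fderiv ℝ u w 1 := by
    rw [hu.fderiv_restrictScalars ℝ]
    simp [← smul_eq_mul]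
  rw [dbar, hI, ← mul_assoc, I_mul_I]
  ring

lemma dbar_eq_zero_of_notMem_tsupport {u : ℂ → ℂ} {w : ℂ} (hw : w ∉ tsupport u) :
    dbar u w = 0 := by
  have : fderiv ℝ u w = 0 :=
    image_eq_zero_of_notMem_tsupport fun h => hw (tsupport_fderiv_subset ℝ h)
  simp [dbar, this]

lemma continuous_dbar {u : ℂ → ℂ} (hu : ContDiff ℝ 1 u) : Continuous (dbar u) := by
  have := hu.continuous_fderiv one_ne_zero
  unfold dbar
  fun_prop

lemma conj_mul_dbar (u : ℂ → ℂ) (w e : ℂ) :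
    (starRingEnd ℂ) e * dbar u w = (fderiv ℝ u w e + I * fderiv ℝ u w (I * e)) / 2 := by
  have fderiv_apply (v : ℂ) : fderiv ℝ u w v = v.re * fderiv ℝ u w 1 + v.im * fderiv ℝ u w I := by
    conv_lhs => rw [show v = v.re • (1 : ℂ) + v.im • I by simp [Complex.re_add_im]]
    rw [map_add, map_smul, map_smul, real_smul, real_smul]
  have conj_eq : (starRingEnd ℂ) e = e.re - e.im * I := by
    apply Complex.ext <;> simp
  rw [fderiv_apply e, fderiv_apply (I * e), dbar, conj_eq]
  simp only [mul_re, mul_im, I_re, I_im]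
  push_cast
  linear_combination (-(e.im : ℂ) * fderiv ℝ u w I / 2) * I_mul_I

lemma integral_Ioi_fderiv_ray {u : ℂ → ℂ} (hu : ContDiff ℝ 1 u) (hsupp : HasCompactSupport u)
    (z : ℂ) {e : ℂ} (he : e ≠ 0) :
    ∫ r : ℝ in Ioi 0, fderiv ℝ u (z + r * e) e = -u z := by
  have ray_deriv (r : ℝ) : HasDerivAt (fun r : ℝ => z + r * e) e r := by
    simpa using ((hasDerivAt_id (r : ℂ)).comp_ofReal.mul_const e).const_add z
  have ray_contDiff : ContDiff ℝ 1 fun r : ℝ => z + r * e :=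
    contDiff_const.add (ofRealCLM.contDiff.mul contDiff_const)
  have ray_embedding : Topology.IsClosedEmbedding fun r : ℝ => z + r * e :=
    (Homeomorph.addLeft z).isClosedEmbedding.comp <|
      (Homeomorph.mulRight₀ e he).isClosedEmbedding.comp Complex.isometry_ofReal.isClosedEmbedding
  have := (hsupp.comp_isClosedEmbedding ray_embedding).integral_Ioi_deriv_eq
    (hu.comp ray_contDiff) 0
  have deriv_eq (r : ℝ) : deriv (u ∘ fun r : ℝ => z + r * e) r = fderiv ℝ u (z + r * e) e :=
    (((hu.differentiable one_ne_zero _).hasFDerivAt).comp_hasDerivAt r (ray_deriv r)).deriv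
  simpa [deriv_eq] using this

lemma integral_Ioo_fderiv_circle {u : ℂ → ℂ} (hu : ContDiff ℝ 1 u) (z : ℂ) {r : ℝ} (hr : r ≠ 0) :
    ∫ θ in Ioo (-π) π, fderiv ℝ u (z + r * exp (θ * I)) (I * exp (θ * I)) = 0 := by
  have circle_deriv (θ : ℝ) :
      HasDerivAt (fun θ : ℝ => z + r * exp (θ * I)) (r • (I * exp (θ * I))) θ := by
    have := ((((hasDerivAt_id (θ : ℂ)).mul_const I).cexp.comp_ofReal).const_mul (r : ℂ)).const_add z
    simpa [mul_comm] using this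
  have u_deriv (θ : ℝ) : HasDerivAt (fun θ : ℝ => u (z + r * exp (θ * I)))
      (r • fderiv ℝ u (z + r * exp (θ * I)) (I * exp (θ * I))) θ := by
    rw [← map_smul]
    exact ((hu.differentiable one_ne_zero _).hasFDerivAt).comp_hasDerivAt θ (circle_deriv θ)
  have cont : Continuous fun θ : ℝ => r • fderiv ℝ u (z + r * exp (θ * I)) (I * exp (θ * I)) := by
    have := hu.continuous_fderiv one_ne_zero
    fun_prop
  have integral_eq := intervalIntegral.integral_eq_sub_of_hasDerivAt (a := -π) (b := π)
    (fun θ _ => u_deriv θ) (cont.intervalIntegrable _ _)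
  rw [intervalIntegral.integral_smul] at integral_eq
  have periodic : exp (↑(-π) * I) = exp (π * I) := by simp [exp_neg]
  rw [periodic, sub_self, smul_eq_zero_iff_right hr,
    intervalIntegral.integral_of_le (by linarith [Real.pi_pos]), integral_Ioc_eq_integral_Ioo]
    at integral_eq
  exact integral_eq

lemma integrableOn_fderiv_polar {u : ℂ → ℂ} (hu : ContDiff ℝ 1 u) (hsupp : HasCompactSupport u)
    (z : ℂ) {v : ℝ → ℂ} (hv : Continuous v) :
    IntegrableOn (fun p : ℝ × ℝ => fderiv ℝ u (z + p.1 * exp (p.2 * I)) (v p.2))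
      (Ioi 0 ×ˢ Ioo (-π) π) := by
  obtain ⟨R, hR⟩ := hsupp.isCompact.isBounded.subset_closedBall z
  have cont : Continuous fun p : ℝ × ℝ => fderiv ℝ u (z + p.1 * exp (p.2 * I)) (v p.2) := by
    have := hu.continuous_fderiv one_ne_zero
    fun_prop
  refine IntegrableOn.of_forall_sdiff_eq_zero
    (cont.continuousOn.integrableOn_compact (isCompact_Icc.prod isCompact_Icc))
    (measurableSet_Ioi.prod measurableSet_Ioo) (s := Icc 0 R ×ˢ Icc (-π) π) ?_
  rintro ⟨r, θ⟩ ⟨⟨hr : 0 < r, hθ⟩, hp⟩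
  have hRr : R < r := by
    by_contra! hrR
    exact hp ⟨⟨hr.le, hrR⟩, Ioo_subset_Icc_self hθ⟩
  have notMem : z + r * exp (θ * I) ∉ tsupport u := fun h => by
    have := hR h
    rw [mem_closedBall, dist_self_add_left, norm_mul, norm_exp_ofReal_mul_I, norm_real, mul_one,
      Real.norm_of_nonneg hr.le] at this
    exact hRr.not_ge this
  have : fderiv ℝ u (z + r * exp (θ * I)) = 0 :=
    image_eq_zero_of_notMem_tsupport fun h => notMem (tsupport_fderiv_subset ℝ h)
  simp [this]

lemma integral_polar_fderiv_radial {u : ℂ → ℂ} (hu : ContDiff ℝ 1 u) (hsupp : HasCompactSupport u)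
    (z : ℂ) :
    ∫ p in Ioi (0 : ℝ) ×ˢ Ioo (-π) π, fderiv ℝ u (z + p.1 * exp (p.2 * I)) (exp (p.2 * I)) =
      -(2 * π) * u z := by
  have integrable := integrableOn_fderiv_polar hu hsupp z (v := fun θ => exp (θ * I)) (by fun_prop)
  rw [Measure.volume_eq_prod] at integrable ⊢
  rw [← setIntegral_prod_swap]
  refine (setIntegral_prod _ integrable.swap).trans ?_
  simp only [Function.comp_apply, Prod.swap_prod_mk,
    integral_Ioi_fderiv_ray hu hsupp z (exp_ne_zero _), setIntegral_const,
    Real.volume_real_Ioo_of_le (neg_le_self Real.pi_pos.le), real_smul]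
  push_cast
  ring

lemma integral_polar_fderiv_angular {u : ℂ → ℂ} (hu : ContDiff ℝ 1 u) (hsupp : HasCompactSupport u)
    (z : ℂ) :
    ∫ p in Ioi (0 : ℝ) ×ˢ Ioo (-π) π, fderiv ℝ u (z + p.1 * exp (p.2 * I)) (I * exp (p.2 * I)) =
      0 := by
  have integrable := integrableOn_fderiv_polar hu hsupp z
    (v := fun θ => I * exp (θ * I)) (by fun_prop)
  rw [Measure.volume_eq_prod] at integrable ⊢
  rw [setIntegral_prod _ integrable]
  exact setIntegral_eq_zero_of_forall_eq_zero fun r (hr : 0 < r) =>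
    integral_Ioo_fderiv_circle hu z hr.ne'

theorem integral_dbar_div_sub {u : ℂ → ℂ} (hu : ContDiff ℝ 1 u) (hsupp : HasCompactSupport u)
    (z : ℂ) : ∫ w, dbar u w / (w - z) = -π * u z := by
  -- The Jacobian `r` of polar coordinates about `z` cancels the pole of the kernel.
  have polar_integrand (p : ℝ × ℝ) (hp : p ∈ Ioi (0 : ℝ) ×ˢ Ioo (-π) π) :
      p.1 • (dbar u (z + Complex.polarCoord.symm p) / Complex.polarCoord.symm p) =
        (fderiv ℝ u (z + p.1 * exp (p.2 * I)) (exp (p.2 * I)) +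
          I * fderiv ℝ u (z + p.1 * exp (p.2 * I)) (I * exp (p.2 * I))) / 2 := by
    have hr : (p.1 : ℂ) ≠ 0 := ofReal_ne_zero.2 (ne_of_gt hp.1)
    have inv_exp : (exp (p.2 * I))⁻¹ = (starRingEnd ℂ) (exp (p.2 * I)) := by
      rw [← exp_conj, ← exp_neg]
      simp
    rw [Complex.polarCoord_symm_apply, ofReal_cos, ofReal_sin, ← exp_mul_I, ← conj_mul_dbar,
      ← inv_exp, real_smul]
    field_simp
  calc ∫ w, dbar u w / (w - z)
      = ∫ w, dbar u (z + w) / w := by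
        rw [← integral_add_left_eq_self _ z]
        simp only [add_sub_cancel_left]
    _ = ∫ p in Ioi (0 : ℝ) ×ˢ Ioo (-π) π,
          (fderiv ℝ u (z + p.1 * exp (p.2 * I)) (exp (p.2 * I)) +
            I * fderiv ℝ u (z + p.1 * exp (p.2 * I)) (I * exp (p.2 * I))) / 2 := by
        rw [← Complex.integral_comp_polarCoord_symm]
        exact setIntegral_congr_fun (measurableSet_Ioi.prod measurableSet_Ioo) polar_integrand
    _ = -π * u z := by
        rw [integral_div, integral_add, integral_const_mul, integral_polar_fderiv_radial hu hsupp,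
          integral_polar_fderiv_angular hu hsupp]
        · ring
        · exact integrableOn_fderiv_polar hu hsupp z (v := fun θ => exp (θ * I)) (by fun_prop)
        · exact (integrableOn_fderiv_polar hu hsupp z (v := fun θ => I * exp (θ * I))
            (by fun_prop)).const_mul I

end CauchyPompeiu

section Runge

open MeasureTheory Complex
open scoped Topology Real

lemma exists_contDiff_hasCompactSupport_eventuallyEq {E F : Type*} [NormedAddCommGroup E]
    [NormedSpace ℝ E] [FiniteDimensional ℝ E] [NormedAddCommGroup F] [NormedSpace ℝ F]
    {n : ℕ∞} {K U : Set E} (hK : IsCompact K) (hU : IsOpen U) (hKU : K ⊆ U) {g : E → F}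
    (hg : ContDiffOn ℝ n g U) :
    ∃ u : E → F, ContDiff ℝ n u ∧ HasCompactSupport u ∧ tsupport u ⊆ U ∧ u =ᶠ[𝓝ˢ K] g := by
  obtain ⟨L, hL, hKL, hLU⟩ := exists_compact_between hK hU hKU
  obtain ⟨χ, hχ_one, hχ_zero, -⟩ := exists_contMDiffMap_one_nhds_of_subset_interior
    (modelWithCornersSelf ℝ E) (n := n) hK.isClosed hKL
  have hsupp : tsupport (fun x => χ x • g x) ⊆ L :=
    closure_minimal (fun x hx => by_contra fun hxL => hx (by simp [hχ_zero x hxL])) hL.isClosed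
  refine ⟨fun x => χ x • g x, contDiff_iff_contDiffAt.2 fun x => ?_,
    hL.of_isClosed_subset (isClosed_tsupport _) hsupp, hsupp.trans hLU,
    hχ_one.mono fun x hx => by simp [hx]⟩
  by_cases hx : x ∈ U
  · exact χ.contMDiff.contDiff.contDiffAt.smul (hg.contDiffAt (hU.mem_nhds hx))
  · exact contDiffAt_const.congr_of_eventuallyEq
      (notMem_tsupport_iff_eventuallyEq.1 fun h => hx (hLU (hsupp h)))

lemma integral_mem_of_isClosed {α 𝕜 E : Type*} [MeasurableSpace α] {μ : Measure α} [RCLike 𝕜]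
    [NormedAddCommGroup E] [NormedSpace ℝ E] [NormedSpace 𝕜 E] [CompleteSpace E] {V : Submodule 𝕜 E}
    (hV : IsClosed (V : Set E)) {φ : α → E} (hφ : ∀ x, φ x ∈ V) : ∫ x, φ x ∂μ ∈ V := by
  have : CompleteSpace V := hV.completeSpace_coe
  have integral_coe := V.subtypeₗᵢ.integral_comp_comm (μ := μ) fun x => (⟨φ x, hφ x⟩ : V)
  simp only [Submodule.coe_subtypeₗᵢ, Submodule.subtype_apply] at integral_coe
  exact integral_coe ▸ (∫ x, (⟨φ x, hφ x⟩ : V) ∂μ).2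

variable {K : Set ℂ}

/-- The Cauchy kernel `z ↦ 1 / (w - z)` with pole `w` outside `K`, as a continuous function
on `K`. -/
noncomputable def cauchyKernel {w : ℂ} (hw : w ∉ K) : C(K, ℂ) where
  toFun z := (w - z)⁻¹
  continuous_toFun := (continuous_const.sub continuous_subtype_val).inv₀ fun z =>
    sub_ne_zero.2 (ne_of_mem_of_not_mem z.2 hw).symm

lemma cauchyKernel_apply {w : ℂ} (hw : w ∉ K) (z : K) : cauchyKernel hw z = (w - z)⁻¹ := rfl

lemma continuous_dbar_div_sub {u : ℂ → ℂ} (hu : ContDiff ℝ 1 u)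
    (hK : ∀ᶠ w in 𝓝ˢ K, dbar u w = 0) :
    Continuous fun x : ℂ × K => dbar u x.1 / (x.1 - x.2) := by
  refine continuous_iff_continuousAt.2 fun ⟨w, z⟩ => ?_
  by_cases h : w = z
  · have near : ∀ᶠ x in 𝓝 w, dbar u x = 0 := nhds_le_nhdsSet (h ▸ z.2) hK
    refine (continuousAt_const (y := (0 : ℂ))).congr ?_
    filter_upwards [(continuous_fst.tendsto (w, z)).eventually near] with x hx
    simp [hx]
  · exact ((continuous_dbar hu).comp continuous_fst).continuousAt.div (by fun_prop)
      (sub_ne_zero.2 h)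

/-- The Cauchy–Pompeiu formula for a cutoff of `g` writes `g` on `K` as a superposition of Cauchy
kernels. -/
theorem exists_mem_eqOn_of_cauchyKernel_mem [CompactSpace K] {U : Set ℂ} (hU : IsOpen U)
    (hKU : K ⊆ U) {g : ℂ → ℂ} (hg : DifferentiableOn ℂ g U) {V : Submodule ℂ C(K, ℂ)}
    (hV : IsClosed (V : Set C(K, ℂ))) (hker : ∀ w (hw : w ∉ K), w ∈ U → cauchyKernel hw ∈ V) :
    ∃ φ ∈ V, ∀ z : K, φ z = g z := by
  obtain ⟨u, hu, hsupp, hsuppU, hug⟩ := exists_contDiff_hasCompactSupport_eventuallyEq (n := 1)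
    (isCompact_iff_compactSpace.2 ‹_›) hU hKU ((hg.contDiffOn hU).restrict_scalars ℝ)
  have dbar_zero : ∀ᶠ w in 𝓝ˢ K, dbar u w = 0 := by
    filter_upwards [hug.eventually_nhdsSet, hU.mem_nhdsSet.2 hKU] with w hw hwU
    exact dbar_eq_zero_of_differentiableAt
      ((hg.differentiableAt (hU.mem_nhds hwU)).congr_of_eventuallyEq hw)
  let Φ : C(ℂ, C(K, ℂ)) := ContinuousMap.curry ⟨_, continuous_dbar_div_sub hu dbar_zero⟩
  have Φ_apply (w : ℂ) (z : K) : Φ w z = dbar u w / (w - z) := rfl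
  have Φ_eq_zero {w : ℂ} (hw : dbar u w = 0) : Φ w = 0 := by
    ext z
    simp [Φ_apply, hw]
  have Φ_mem (w : ℂ) : Φ w ∈ V := by
    by_cases hw : dbar u w = 0
    · exact Φ_eq_zero hw ▸ V.zero_mem
    have hwK : w ∉ K := fun h => hw (dbar_zero.self_of_nhdsSet w h)
    have hwU : w ∈ U := hsuppU (by_contra fun h => hw (dbar_eq_zero_of_notMem_tsupport h))
    have : Φ w = dbar u w • cauchyKernel hwK := by
      ext z
      simp [Φ_apply, cauchyKernel_apply, div_eq_mul_inv]
    exact this ▸ V.smul_mem _ (hker w hwK hwU)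
  have Φ_integrable : Integrable Φ :=
    Φ.continuous.integrable_of_hasCompactSupport <| HasCompactSupport.intro hsupp
      fun w hw => Φ_eq_zero (dbar_eq_zero_of_notMem_tsupport hw)
  refine ⟨(-π : ℂ)⁻¹ • ∫ w, Φ w, V.smul_mem _ (integral_mem_of_isClosed hV Φ_mem), fun z => ?_⟩
  have eval_integral : (∫ w, Φ w) z = -π * u z := by
    rw [← integral_dbar_div_sub hu hsupp z]
    exact ((ContinuousMap.evalCLM ℂ z).integral_comp_comm Φ_integrable).symm
  rw [ContinuousMap.smul_apply, eval_integral, smul_eq_mul, hug.self_of_nhdsSet z.2,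
    inv_mul_cancel_left₀ (neg_ne_zero.2 (ofReal_ne_zero.2 Real.pi_ne_zero))]

lemma cauchyKernel_mem_closure_span_pow [CompactSpace K] {w p : ℂ} (hw : w ∉ K) (hp : p ∉ K)
    (hwp : ∀ z ∈ K, ‖p - w‖ < ‖p - z‖) :
    cauchyKernel hw ∈
      (Submodule.span ℂ (range fun j : ℕ => cauchyKernel hp ^ (j + 1))).topologicalClosure := by
  set x : C(K, ℂ) := (p - w) • cauchyKernel hp with hx
  have norm_x : ‖x‖ < 1 := by
    refine (ContinuousMap.norm_lt_iff _ one_pos).2 fun z => ?_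
    rw [hx, ContinuousMap.smul_apply, cauchyKernel_apply, smul_eq_mul, ← div_eq_mul_inv, norm_div]
    exact (div_lt_one ((norm_nonneg _).trans_lt (hwp z z.2))).2 (hwp z z.2)
  have kernel_mul : cauchyKernel hw * (1 - x) = cauchyKernel hp := by
    ext z
    have hwz : w - z ≠ 0 := sub_ne_zero.2 fun h => hw (h ▸ z.2)
    have hpz : p - z ≠ 0 := sub_ne_zero.2 fun h => hp (h ▸ z.2)
    simp only [hx, ContinuousMap.mul_apply, ContinuousMap.sub_apply, ContinuousMap.one_apply,
      ContinuousMap.smul_apply, cauchyKernel_apply, smul_eq_mul]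
    field_simp
    ring
  have kernel_eq : cauchyKernel hw = cauchyKernel hp * ∑' j, x ^ j := by
    rw [← kernel_mul, mul_assoc, mul_neg_geom_series x norm_x, mul_one]
  have partial_sums : Tendsto (fun n => cauchyKernel hp * ∑ j ∈ Finset.range n, x ^ j) atTop
      (𝓝 (cauchyKernel hw)) := by
    rw [kernel_eq]
    exact (summable_geometric_of_norm_lt_one norm_x).hasSum.tendsto_sum_nat.const_mul _
  refine mem_closure_of_tendsto partial_sums (Eventually.of_forall fun n => ?_)
  rw [Finset.mul_sum]
  refine Submodule.sum_mem _ fun j _ => ?_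
  have : cauchyKernel hp * x ^ j = (p - w) ^ j • cauchyKernel hp ^ (j + 1) := by
    rw [hx, smul_pow, mul_smul_comm, ← pow_succ']
  exact this ▸ Submodule.smul_mem _ _ (Submodule.subset_span ⟨j, rfl⟩)

/-- The rational functions vanishing at infinity whose poles lie in `A`, in partial fraction form:
the span of the functions `z ↦ 1 / (p - z) ^ (j + 1)` with `p ∈ A`. -/
def properRational (A : Set ℂ) : Submodule ℂ (ℂ → ℂ) :=
  Submodule.span ℂ {f | ∃ p ∈ A, ∃ j : ℕ, f = fun z => (p - z)⁻¹ ^ (j + 1)}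

lemma exists_finite_differentiableOn_compl_of_mem_properRational {A : Set ℂ} {R : ℂ → ℂ}
    (hR : R ∈ properRational A) : ∃ P : Set ℂ, P.Finite ∧ P ⊆ A ∧ DifferentiableOn ℂ R Pᶜ := by
  induction hR using Submodule.span_induction with
  | mem f hf =>
    obtain ⟨p, hp, j, rfl⟩ := hf
    refine ⟨{p}, finite_singleton p, singleton_subset_iff.2 hp, ?_⟩
    exact ((differentiableOn_const p).sub differentiableOn_id).inv
      (fun z hz => sub_ne_zero.2 (Ne.symm hz)) |>.pow _
  | zero => exact ⟨∅, finite_empty, empty_subset A, differentiableOn_const 0⟩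
  | add f g _ _ hf hg =>
    obtain ⟨P, hP, hPA, hfP⟩ := hf
    obtain ⟨Q, hQ, hQA, hgQ⟩ := hg
    exact ⟨P ∪ Q, hP.union hQ, union_subset hPA hQA,
      (hfP.mono (compl_subset_compl.2 subset_union_left)).add
        (hgQ.mono (compl_subset_compl.2 subset_union_right))⟩
  | smul c f _ hf =>
    obtain ⟨P, hP, hPA, hfP⟩ := hf
    exact ⟨P, hP, hPA, hfP.const_smul c⟩

lemma tendsto_cobounded_of_mem_properRational {A : Set ℂ} {R : ℂ → ℂ}
    (hR : R ∈ properRational A) : Tendsto R (cobounded ℂ) (𝓝 0) := by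
  induction hR using Submodule.span_induction with
  | mem f hf =>
    obtain ⟨p, -, j, rfl⟩ := hf
    simpa using (tendsto_inv₀_cobounded.comp (tendsto_const_sub_cobounded p)).pow (j + 1)
  | zero => exact tendsto_const_nhds
  | add f g _ _ hf hg => exact add_zero (0 : ℂ) ▸ hf.add hg
  | smul c f _ hf => exact smul_zero (A := ℂ) c ▸ hf.const_smul c

/-- The continuous functions on `K` that are restrictions of elements of `properRational A`. -/
noncomputable def properRationalOn (A K : Set ℂ) : Submodule ℂ C(K, ℂ) :=
  ((properRational A).map (LinearMap.funLeft ℂ ℂ Subtype.val)).comap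
    (ContinuousMap.coeFnLinearMap ℂ)

lemma mem_properRationalOn {A : Set ℂ} {φ : C(K, ℂ)} :
    φ ∈ properRationalOn A K ↔ ∃ R ∈ properRational A, ∀ z : K, R z = φ z := by
  simp [properRationalOn, funext_iff, LinearMap.funLeft_apply]

lemma cauchyKernel_mem_closure_properRationalOn [CompactSpace K] {A : Set ℂ} {w p : ℂ}
    (hw : w ∉ K) (hpA : p ∈ A) (hwp : ∀ z ∈ K, ‖p - w‖ < ‖p - z‖) :
    cauchyKernel hw ∈ (properRationalOn A K).topologicalClosure := by
  have hp : p ∉ K := fun h => by simpa using (norm_nonneg _).trans_lt (hwp p h)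
  refine Submodule.topologicalClosure_mono (Submodule.span_le.2 ?_)
    (cauchyKernel_mem_closure_span_pow hw hp hwp)
  rintro _ ⟨j, rfl⟩
  exact mem_properRationalOn.2 ⟨_, Submodule.subset_span ⟨p, hpA, j, rfl⟩, fun z => rfl⟩

lemma setOf_le_infDist_compl_subset {X : Type*} [PseudoMetricSpace X] (U : Set X) {δ : ℝ}
    (hδ : 0 < δ) : {x | δ ≤ infDist x Uᶜ} ⊆ U := by
  intro x (hx : δ ≤ infDist x Uᶜ)
  by_contra hxU
  exact (hδ.trans_le hx).ne' (infDist_zero_of_mem hxU)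

lemma isCompact_setOf_le_infDist_compl {X : Type*} [PseudoMetricSpace X] [ProperSpace X] {U : Set X}
    (hU : IsBounded U) {δ : ℝ} (hδ : 0 < δ) : IsCompact {x | δ ≤ infDist x Uᶜ} :=
  isCompact_of_isClosed_isBounded (isClosed_le continuous_const (continuous_infDist_pt _))
    (hU.subset (setOf_le_infDist_compl_subset U hδ))

lemma exists_pos_le_infDist_compl {X : Type*} [PseudoMetricSpace X] {U K : Set X} (hU : IsOpen U)
    (hU' : U ≠ univ) (hK : IsCompact K) (hKU : K ⊆ U) : ∃ δ > 0, ∀ z ∈ K, δ ≤ infDist z Uᶜ := by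
  obtain ⟨δ, hδ, hδU⟩ := hK.exists_thickening_subset_open hU hKU
  refine ⟨δ, hδ, fun z hz => (le_infDist (nonempty_compl.2 hU')).2 fun y hy => ?_⟩
  by_contra! hzy
  exact hy (hδU (mem_thickening_iff.2 ⟨z, hz, dist_comm z y ▸ hzy⟩))

theorem exists_mem_properRational_frontier_norm_sub_lt {U : Set ℂ} (hU : IsOpen U)
    (hUb : IsBounded U) {g : ℂ → ℂ} (hg : DifferentiableOn ℂ g U) {K : Set ℂ} (hK : IsCompact K)
    (hKU : K ⊆ U) {ε : ℝ} (hε : 0 < ε) :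
    ∃ R ∈ properRational (frontier U), ∀ z ∈ K, ‖R z - g z‖ < ε := by
  have hU' : U ≠ univ := fun h => NormedSpace.unbounded_univ ℂ ℂ (h ▸ hUb)
  obtain ⟨δ, hδ, hKδ⟩ := exists_pos_le_infDist_compl hU hU' hK hKU
  -- A point of `U` outside `L` is closer to some boundary point than any point of `L` is.
  set L := {z | δ ≤ infDist z Uᶜ}
  have hLU : L ⊆ U := setOf_le_infDist_compl_subset U hδ
  have : CompactSpace L :=
    isCompact_iff_compactSpace.1 (isCompact_setOf_le_infDist_compl hUb hδ)
  have kernel_mem (w : ℂ) (hwL : w ∉ L) (hwU : w ∈ U) :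
      cauchyKernel hwL ∈ (properRationalOn (frontier U) L).topologicalClosure := by
    obtain ⟨p, hp, hwp⟩ := exists_mem_frontier_infDist_compl_eq_dist hwU hU'
    refine cauchyKernel_mem_closure_properRationalOn hwL hp fun z hz => ?_
    have hpU : p ∈ Uᶜ := (hU.frontier_eq ▸ hp).2
    rw [← dist_eq_norm, ← dist_eq_norm, dist_comm p w, dist_comm p z, ← hwp]
    exact (not_le.1 hwL).trans_le (hz.trans (infDist_le_dist_of_mem hpU))
  obtain ⟨φ, hφ, hφg⟩ := exists_mem_eqOn_of_cauchyKernel_mem hU hLU hg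
    (Submodule.isClosed_topologicalClosure _) kernel_mem
  obtain ⟨ψ, hψ, hφψ⟩ := Metric.mem_closure_iff.1 hφ ε hε
  obtain ⟨R, hR, hRψ⟩ := mem_properRationalOn.1 hψ
  refine ⟨R, hR, fun z hz => ?_⟩
  have := (ContinuousMap.dist_lt_iff hε).1 hφψ ⟨z, hKδ z hz⟩
  rwa [hφg, ← hRψ, dist_comm, dist_eq_norm] at this

end Runge

section ScalingBlocks

open scoped Topology

/-- `F` is holomorphic off a finite subset of `A` and tends to `0` at the two ends `0` and `∞` of
the punctured plane, so that `F (c * z)` is negligible when `c * z` is very small or very large. -/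
structure IsScalingBlock (A : Set ℂ) (F : ℂ → ℂ) : Prop where
  exists_finite_differentiableOn_compl :
    ∃ P : Set ℂ, P.Finite ∧ P ⊆ A ∧ DifferentiableOn ℂ F Pᶜ
  tendsto_zero : Tendsto F (𝓝 0) (𝓝 0)
  tendsto_cobounded : Tendsto F (cobounded ℂ) (𝓝 0)

lemma isScalingBlock_zero (A : Set ℂ) : IsScalingBlock A 0 where
  exists_finite_differentiableOn_compl :=
    ⟨∅, finite_empty, empty_subset A, differentiableOn_const 0⟩
  tendsto_zero := tendsto_const_nhds
  tendsto_cobounded := tendsto_const_nhds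

lemma IsScalingBlock.continuousOn_of_disjoint {A U : Set ℂ} {F : ℂ → ℂ} (hF : IsScalingBlock A F)
    (hAU : Disjoint A U) : ContinuousOn F U := by
  obtain ⟨P, -, hPA, hFP⟩ := hF.exists_finite_differentiableOn_compl
  exact hFP.continuousOn.mono fun z hzU hzP => hAU.notMem_of_mem_left (hPA hzP) hzU

-- The factor `1 + p / (z - p) = z / (z - p)` vanishes at `0` and is bounded near `∞`.
lemma isScalingBlock_mul_of_mem_properRational {A : Set ℂ} (hA : 0 ∉ A) {R : ℂ → ℂ}
    (hR : R ∈ properRational A) {p : ℂ} (hp : p ∈ A) :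
    IsScalingBlock A fun z => R z * (1 + p * (z - p)⁻¹) := by
  obtain ⟨P, hP, hPA, hRP⟩ := exists_finite_differentiableOn_compl_of_mem_properRational hR
  have hpPA : insert p P ⊆ A := insert_subset hp hPA
  have differentiableOn :
      DifferentiableOn ℂ (fun z => R z * (1 + p * (z - p)⁻¹)) (insert p P)ᶜ := by
    refine (hRP.mono (compl_subset_compl.2 (subset_insert p P))).mul ?_
    refine (differentiableOn_const 1).add (((differentiableOn_id.sub_const p).inv ?_).const_mul p)
    exact fun z hz => sub_ne_zero.2 fun h => hz (mem_insert_iff.2 (Or.inl h))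
  refine ⟨⟨insert p P, hP.insert p, hpPA, differentiableOn⟩, ?_, ?_⟩
  · have mem_nhds : (insert p P)ᶜ ∈ 𝓝 (0 : ℂ) :=
      (hP.insert p).isClosed.isOpen_compl.mem_nhds fun h => hA (hpPA h)
    have hp0 : p ≠ 0 := ne_of_mem_of_not_mem hp hA
    simpa [hp0] using (differentiableOn.continuousOn.continuousAt mem_nhds).tendsto
  · have := (tendsto_inv₀_cobounded.comp (tendsto_sub_const_cobounded p)).const_mul p
    simpa using (tendsto_cobounded_of_mem_properRational hR).mul (this.const_add 1)

theorem exists_isScalingBlock_norm_sub_lt {U : Set ℂ} (hU : IsOpen U) (hUb : IsBounded U)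
    (h0 : 0 ∉ closure U) {g : ℂ → ℂ} (hg : DifferentiableOn ℂ g U) {K : Set ℂ} (hK : IsCompact K)
    (hKU : K ⊆ U) {ε : ℝ} (hε : 0 < ε) :
    ∃ F, IsScalingBlock (frontier U) F ∧ ∀ z ∈ K, ‖F z - g z‖ < ε := by
  rcases K.eq_empty_or_nonempty with rfl | hKne
  · exact ⟨0, isScalingBlock_zero _, by simp⟩
  obtain ⟨p, hp⟩ : (frontier U).Nonempty :=
    nonempty_frontier_iff.2 ⟨hKne.mono hKU, fun h => NormedSpace.unbounded_univ ℂ ℂ (h ▸ hUb)⟩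
  have h0U (z : ℂ) (hz : z ∈ U) : z ≠ 0 := ne_of_mem_of_not_mem (subset_closure hz) h0
  have hpU (z : ℂ) (hz : z ∈ U) : z - p ≠ 0 :=
    sub_ne_zero.2 (ne_of_mem_of_not_mem hz (hU.frontier_eq ▸ hp).2)
  have cont : ContinuousOn (fun z => 1 + p * (z - p)⁻¹) K :=
    continuousOn_const.add <| continuousOn_const.mul <|
      (continuousOn_id.sub continuousOn_const).inv₀ fun z hz => hpU z (hKU hz)
  obtain ⟨C, hC⟩ := hK.exists_bound_of_continuousOn cont
  have hC0 : 0 ≤ C := (norm_nonneg _).trans (hC _ hKne.some_mem)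
  obtain ⟨R, hR, hRg⟩ := exists_mem_properRational_frontier_norm_sub_lt hU hUb
    (g := fun z => g z * ((z - p) / z))
    (hg.mul ((differentiableOn_id.sub_const p).div differentiableOn_id h0U)) hK hKU
    (div_pos hε (by positivity : 0 < C + 1))
  refine ⟨_, isScalingBlock_mul_of_mem_properRational
    (fun h => h0 (frontier_subset_closure h)) hR hp, fun z hz => ?_⟩
  have factor : R z * (1 + p * (z - p)⁻¹) - g z =
      (R z - g z * ((z - p) / z)) * (1 + p * (z - p)⁻¹) := by
    have := h0U z (hKU hz)
    have := hpU z (hKU hz)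
    field_simp
    ring
  calc ‖R z * (1 + p * (z - p)⁻¹) - g z‖
      = ‖R z - g z * ((z - p) / z)‖ * ‖1 + p * (z - p)⁻¹‖ := by rw [factor, norm_mul]
    _ ≤ ‖R z - g z * ((z - p) / z)‖ * (C + 1) := by gcongr; linarith [hC z hz]
    _ < ε := (lt_div_iff₀ (by positivity)).1 (hRg z hz)

lemma exists_seq_dense_on_compacts {X E : Type*} [TopologicalSpace X] [LocallyCompactSpace X]
    [SecondCountableTopology X] [PseudoMetricSpace E] [SecondCountableTopology E] {U : Set X}
    (hU : IsOpen U) {𝓕 : Set (X → E)} (h𝓕 : 𝓕.Nonempty) (hcont : ∀ F ∈ 𝓕, ContinuousOn F U) :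
    ∃ S : ℕ → X → E, (∀ n, S n ∈ 𝓕) ∧
      ∀ F ∈ 𝓕, ∀ K ⊆ U, IsCompact K → ∀ ε > 0, ∃ n, ∀ x ∈ K, dist (S n x) (F x) < ε := by
  let ρ : 𝓕 → C(U, E) := fun F => ⟨U.domRestrict F.1, (hcont F.1 F.2).domRestrict⟩
  have := hU.locallyCompactSpace
  let _ : TopologicalSpace 𝓕 := .induced ρ inferInstance
  have := TopologicalSpace.secondCountableTopology_induced 𝓕 C(U, E) ρ
  have := h𝓕.to_subtype
  refine ⟨fun n => TopologicalSpace.denseSeq 𝓕 n, fun n => Subtype.coe_prop _,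
    fun F hF K hKU hK ε hε => ?_⟩
  have hK' : IsCompact ((↑) ⁻¹' K : Set U) :=
    (Topology.IsInducing.subtypeVal.isCompact_preimage_iff (by simpa using hKU)).2 hK
  have tendsto_ρ : Tendsto ρ (𝓝 ⟨F, hF⟩) (𝓝 (ρ ⟨F, hF⟩)) := continuous_induced_dom.tendsto _
  have near := Metric.tendstoUniformlyOn_iff.1
    (ContinuousMap.tendsto_iff_forall_isCompact_tendstoUniformlyOn.1 tendsto_ρ _ hK') ε hε
  obtain ⟨n, hn⟩ := (TopologicalSpace.denseRange_denseSeq 𝓕).mem_nhds near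
  exact ⟨n, fun x hx => dist_comm (F x) _ ▸ hn ⟨x, hKU hx⟩ hx⟩

lemma exists_seq_isScalingBlock_frequently {U : Set ℂ} (hU : IsOpen U) (hUb : IsBounded U)
    (h0 : 0 ∉ closure U) :
    ∃ F : ℕ → ℂ → ℂ, (∀ n, IsScalingBlock (frontier U) (F n)) ∧
      ∀ g : ℂ → ℂ, DifferentiableOn ℂ g U → ∀ K ⊆ U, IsCompact K → ∀ ε > 0,
        ∃ᶠ n in atTop, ∀ z ∈ K, ‖F n z - g z‖ < ε := by
  obtain ⟨S, hS, S_dense⟩ := exists_seq_dense_on_compacts hU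
    (𝓕 := {F | IsScalingBlock (frontier U) F}) ⟨0, isScalingBlock_zero _⟩
    fun F hF => hF.continuousOn_of_disjoint (disjoint_frontier_iff_isOpen.2 hU)
  -- Enumerating through `Nat.unpair` repeats every `S i` infinitely often.
  refine ⟨fun n => S n.unpair.1, fun n => hS _, fun g hg K hKU hK ε hε => ?_⟩
  obtain ⟨F, hF, hFg⟩ := exists_isScalingBlock_norm_sub_lt hU hUb h0 hg hK hKU (half_pos hε)
  obtain ⟨i, hi⟩ := S_dense F hF K hKU hK (ε / 2) (half_pos hε)
  refine frequently_atTop.2 fun N => ⟨Nat.pair i N, Nat.right_le_pair i N, fun z hz => ?_⟩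
  calc ‖S (Nat.pair i N).unpair.1 z - g z‖
      ≤ ‖S i z - F z‖ + ‖F z - g z‖ := by
        rw [Nat.unpair_pair]
        exact norm_sub_le_norm_sub_add_norm_sub _ _ _
    _ < ε := by
        have := dist_eq_norm (S i z) (F z) ▸ hi z hz
        linarith [hFg z hz]

end ScalingBlocks

section Scales

open scoped Topology

lemma eventually_forall_norm_mul_natCast_le {E : Type*} [SeminormedAddCommGroup E] {p : E → Prop}
    (hp : ∀ᶠ x in 𝓝 0, p x) (R : ℝ) : ∀ᶠ T : ℕ in atTop, ∀ x, ‖x‖ * T ≤ R → p x := by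
  obtain ⟨ε, hε, hball⟩ := Metric.eventually_nhds_iff_ball.1 hp
  filter_upwards [(tendsto_natCast_atTop_atTop.const_mul_atTop hε).eventually_gt_atTop R]
    with T hT x hx
  refine hball x (mem_ball_zero_iff.2 ?_)
  exact lt_of_mul_lt_mul_right (hx.trans_lt hT) T.cast_nonneg

lemma eventually_forall_mul_natCast_le_norm {E : Type*} [SeminormedAddCommGroup E] {p : E → Prop}
    (hp : ∀ᶠ x in cobounded E, p x) {r : ℝ} (hr : 0 < r) :
    ∀ᶠ T : ℕ in atTop, ∀ x, r * T ≤ ‖x‖ → p x := by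
  obtain ⟨C, -, hC⟩ := hasBasis_cobounded_norm.eventually_iff.1 hp
  filter_upwards [(tendsto_natCast_atTop_atTop.const_mul_atTop hr).eventually_ge_atTop C]
    with T hT x hx
  exact hC (hT.trans hx)

lemma exists_strictMono_mul_le (T : ℕ → ℕ) :
    ∃ k : ℕ → ℕ, StrictMono k ∧ (∀ n, 0 < k n) ∧ ∀ m n, m < n → T n * k m ≤ k n := by
  let k (n : ℕ) : ℕ := ∏ j ∈ Finset.range (n + 1), (T j + 2)
  have k_pos (n : ℕ) : 0 < k n := Finset.prod_pos fun j _ => by omega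
  have k_succ (n : ℕ) : k (n + 1) = k n * (T (n + 1) + 2) := Finset.prod_range_succ _ _
  have k_strictMono : StrictMono k := strictMono_nat_of_lt_succ fun n => by
    nlinarith [k_succ n, k_pos n, Nat.zero_le (k n * T (n + 1))]
  refine ⟨k, k_strictMono, k_pos, fun m n hmn => ?_⟩
  obtain ⟨n, rfl⟩ := Nat.exists_eq_succ_of_ne_zero hmn.ne_bot
  calc T (n + 1) * k m ≤ (T (n + 1) + 2) * k n :=
        Nat.mul_le_mul (Nat.le_add_right _ 2) (k_strictMono.monotone (Nat.lt_succ_iff.1 hmn))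
    _ = k (n + 1) := by rw [k_succ, mul_comm]

/-- The scales `k` grow so fast that whenever `k n * z` lies in the annulus `r ≤ |ζ| ≤ R`, every
other `k m * z` lies outside it, where moreover `F m` is negligible. -/
structure SeparatesScales (r R : ℝ) (F : ℕ → ℂ → ℂ) (k : ℕ → ℕ) : Prop where
  strictMono : StrictMono k
  pos : ∀ n, 0 < k n
  outer : ∀ ⦃n m⦄, n < m → ∀ z : ℂ, r ≤ ‖k n * z‖ →
    R < ‖k m * z‖ ∧ ‖F m (k m * z)‖ ≤ (1 / 4) ^ m
  inner : ∀ ⦃m n⦄, m < n → ∀ z : ℂ, ‖k n * z‖ ≤ R →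
    ‖k m * z‖ < r ∧ ‖F m (k m * z)‖ ≤ (1 / 4) ^ n

lemma exists_separatesScales {r : ℝ} (hr : 0 < r) (R : ℝ) {F : ℕ → ℂ → ℂ}
    (h_zero : ∀ n, Tendsto (F n) (𝓝 0) (𝓝 0)) (h_infty : ∀ n, Tendsto (F n) (cobounded ℂ) (𝓝 0)) :
    ∃ k, SeparatesScales r R F k := by
  have outer (n : ℕ) : ∀ᶠ T : ℕ in atTop, ∀ ζ : ℂ, r * T ≤ ‖ζ‖ → R < ‖ζ‖ ∧ ‖F n ζ‖ ≤ (1 / 4) ^ n :=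
    eventually_forall_mul_natCast_le_norm ((tendsto_norm_cobounded_atTop.eventually_gt_atTop R).and
      ((h_infty n).norm.eventually_le_const (by simp))) hr
  have inner (n : ℕ) : ∀ᶠ T : ℕ in atTop, ∀ m ∈ Iio n, ∀ ζ : ℂ, ‖ζ‖ * T ≤ R →
      ‖ζ‖ < r ∧ ‖F m ζ‖ ≤ (1 / 4) ^ n :=
    (eventually_all_finite (finite_Iio n)).2 fun m _ =>
      eventually_forall_norm_mul_natCast_le
        (((continuous_norm.tendsto' 0 0 norm_zero).eventually_lt_const hr).and
          ((h_zero m).norm.eventually_le_const (by simp))) R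
  choose T T_outer T_inner using fun n => ((outer n).and (inner n)).exists
  obtain ⟨k, k_strictMono, k_pos, T_mul_le⟩ := exists_strictMono_mul_le T
  have ratio {m n : ℕ} (hmn : m < n) (z : ℂ) : ‖k m * z‖ * T n ≤ ‖k n * z‖ := by
    have : (T n * k m : ℝ) ≤ k n := mod_cast T_mul_le m n hmn
    simp only [norm_mul, norm_natCast]
    nlinarith [norm_nonneg z]
  refine ⟨k, k_strictMono, k_pos, fun n m hnm z hz => ?_, fun m n hmn z hz => ?_⟩
  · refine T_outer m _ (le_trans ?_ (ratio hnm z))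
    gcongr
  · exact T_inner n m hmn _ ((ratio hmn z).trans hz)

end Scales

section Gluing

open scoped Topology

/-- The sum of the functions `z ↦ F m (k m * z)`: a copy of `F m` is placed at scale `1 / k m`. -/
noncomputable def scaledSum (F : ℕ → ℂ → ℂ) (k : ℕ → ℕ) (z : ℂ) : ℂ := ∑' m, F m (k m * z)

/-- The domain of `scaledSum F k` when `F m` is holomorphic off `P m`: the origin, where the scales
accumulate, and the rescaled singular sets are removed. -/
def scaledDomain (P : ℕ → Set ℂ) (k : ℕ → ℕ) : Set ℂ := {z | z ≠ 0 ∧ ∀ m, k m * z ∉ P m}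

lemma isConnected_scaledDomain {P : ℕ → Set ℂ} (hP : ∀ m, (P m).Countable) {k : ℕ → ℕ}
    (hk : ∀ m, 0 < k m) : IsConnected (scaledDomain P k) := by
  have countable : ({0} ∪ ⋃ m, (fun z : ℂ => k m * z) ⁻¹' P m).Countable :=
    (countable_singleton 0).union <| countable_iUnion fun m =>
      (hP m).preimage_of_injOn (mul_right_injective₀ (Nat.cast_ne_zero.2 (hk m).ne')).injOn
  convert countable.isConnected_compl_of_one_lt_rank (by simp) using 1
  ext z
  simp [scaledDomain]

namespace SeparatesScales

variable {r R : ℝ} {F : ℕ → ℂ → ℂ} {k : ℕ → ℕ} (hk : SeparatesScales r R F k)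
include hk

lemma mul_div_cancel (n : ℕ) (ζ : ℂ) : k n * (ζ / k n) = ζ :=
  mul_div_cancel₀ ζ (Nat.cast_ne_zero.2 (hk.pos n).ne')

lemma notMem_annulus_and_norm_le {m n : ℕ} (hmn : m ≠ n) {ζ : ℂ} (hζ : ‖ζ‖ ∈ Icc r R) :
    ‖k m * (ζ / k n)‖ ∉ Icc r R ∧ ‖F m (k m * (ζ / k n))‖ ≤ (1 / 2) ^ m * (1 / 2) ^ n := by
  have pow_le {i j l : ℕ} (hi : i ≤ l) (hj : j ≤ l) :
      (1 / 4 : ℝ) ^ l ≤ (1 / 2) ^ i * (1 / 2) ^ j := by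
    rw [show (1 / 4 : ℝ) = 1 / 2 * (1 / 2) by norm_num, mul_pow]
    exact mul_le_mul (pow_le_pow_of_le_one (by norm_num) (by norm_num) hi)
      (pow_le_pow_of_le_one (by norm_num) (by norm_num) hj) (by positivity) (by positivity)
  rw [← hk.mul_div_cancel n ζ] at hζ
  rcases hmn.lt_or_gt with hmn | hnm
  · obtain ⟨small, bound⟩ := hk.inner hmn _ hζ.2
    exact ⟨fun h => small.not_ge h.1, bound.trans (pow_le hmn.le le_rfl)⟩
  · obtain ⟨large, bound⟩ := hk.outer hnm _ hζ.1
    exact ⟨fun h => large.not_ge h.2, bound.trans (pow_le le_rfl hnm.le)⟩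

lemma eventually_forall_le_norm {δ : ℝ} (hδ : 0 < δ) :
    ∀ᶠ m in atTop, ∀ z : ℂ, δ ≤ ‖z‖ → R < ‖k m * z‖ ∧ ‖F m (k m * z)‖ ≤ (1 / 4) ^ m := by
  obtain ⟨N, hN⟩ := (((tendsto_natCast_atTop_atTop (R := ℝ)).comp
    hk.strictMono.tendsto_atTop).atTop_mul_const hδ).eventually_ge_atTop r |>.exists
  filter_upwards [eventually_gt_atTop N] with m hm z hz
  refine hk.outer hm z (hN.trans ?_)
  rw [norm_mul, norm_natCast]
  exact mul_le_mul_of_nonneg_left hz (Nat.cast_nonneg _)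

lemma isOpen_scaledDomain {P : ℕ → Set ℂ} (hP : ∀ m, IsClosed (P m))
    (hPR : ∀ m, P m ⊆ closedBall 0 R) : IsOpen (scaledDomain P k) := by
  refine isOpen_iff_eventually.2 fun z ⟨hz0, hz⟩ => ?_
  obtain ⟨N, hN⟩ := eventually_atTop.1 <|
    hk.eventually_forall_le_norm (half_pos (norm_pos_iff.2 hz0))
  have finitely_many : ∀ᶠ w : ℂ in 𝓝 z, ∀ m ∈ Iio N, k m * w ∉ P m :=
    (eventually_all_finite (finite_Iio N)).2 fun m _ =>
      ((continuous_const_mul _).tendsto z).eventually ((hP m).isOpen_compl.mem_nhds (hz m))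
  have away : ∀ᶠ w in 𝓝 z, ‖z‖ / 2 < ‖w‖ :=
    (continuous_norm.tendsto z).eventually_const_lt (half_lt_self (norm_pos_iff.2 hz0))
  filter_upwards [finitely_many, away, isOpen_ne.mem_nhds hz0] with w hw hzw hw0
  refine ⟨hw0, fun m hm => ?_⟩
  rcases lt_or_ge m N with hmN | hNm
  · exact hw m hmN hm
  · exact (hN m hNm w hzw.le).1.not_ge (mem_closedBall_zero_iff.1 (hPR m hm))

lemma summable {z : ℂ} (hz : z ≠ 0) : Summable fun m => F m (k m * z) :=
  have geometric : Summable fun m : ℕ => (1 / 4 : ℝ) ^ m :=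
    summable_geometric_of_lt_one (by norm_num) (by norm_num)
  geometric.of_norm_bounded_eventually_nat
    ((hk.eventually_forall_le_norm (norm_pos_iff.2 hz)).mono fun _ hm => (hm z le_rfl).2)

lemma differentiableOn_scaledSum {P : ℕ → Set ℂ} (hP : ∀ m, IsClosed (P m))
    (hPR : ∀ m, P m ⊆ closedBall 0 R) (hF : ∀ m, DifferentiableOn ℂ (F m) (P m)ᶜ) :
    DifferentiableOn ℂ (scaledSum F k) (scaledDomain P k) := by
  have isOpen := hk.isOpen_scaledDomain hP hPR
  refine SummableLocallyUniformlyOn.differentiableOn isOpen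
    (.of_locally_bounded_eventually isOpen fun K hK hKc => ?_) fun m z hz => ?_
  · obtain ⟨δ, hδ, hKδ⟩ := hKc.exists_forall_le' continuous_norm.continuousOn
      fun z hz => norm_pos_iff.2 (hK hz).1
    refine ⟨_, summable_geometric_of_lt_one (by norm_num : (0 : ℝ) ≤ 1 / 4) (by norm_num), ?_⟩
    rw [Nat.cofinite_eq_atTop]
    exact (hk.eventually_forall_le_norm hδ).mono fun m hm z hz => (hm z (hKδ z hz)).2
  · have := (hF m).differentiableAt ((hP m).isOpen_compl.mem_nhds (hz.2 m))
    exact DifferentiableAt.comp z this (differentiableAt_id.const_mul _)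

lemma norm_scaledSum_sub_le (hr : 0 < r) (n : ℕ) {ζ : ℂ} (hζ : ‖ζ‖ ∈ Icc r R) :
    ‖scaledSum F k (ζ / k n) - F n ζ‖ ≤ 2 * (1 / 2) ^ n := by
  have ne_zero : ζ / k n ≠ 0 :=
    div_ne_zero (norm_pos_iff.1 (hr.trans_le hζ.1)) (Nat.cast_ne_zero.2 (hk.pos n).ne')
  rw [scaledSum, (hk.summable ne_zero).tsum_eq_add_tsum_ite n, hk.mul_div_cancel,
    add_sub_cancel_left]
  refine tsum_of_norm_bounded (hasSum_geometric_two.mul_right _) fun m => ?_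
  split_ifs with hmn
  · simp
  · exact (hk.notMem_annulus_and_norm_le hmn hζ).2

lemma mapsTo_scaledDomain {P : ℕ → Set ℂ} (hr : 0 < r) (hP : ∀ m, ∀ z ∈ P m, ‖z‖ ∈ Icc r R)
    {U : Set ℂ} (hU : ∀ z ∈ U, ‖z‖ ∈ Icc r R) {n : ℕ} (hPU : Disjoint (P n) U) :
    MapsTo (fun z => z / (k n : ℂ)) U (scaledDomain P k) := by
  refine fun ζ hζ => ⟨div_ne_zero (norm_pos_iff.1 (hr.trans_le (hU ζ hζ).1))
    (Nat.cast_ne_zero.2 (hk.pos n).ne'), fun m hm => ?_⟩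
  rcases eq_or_ne m n with rfl | hmn
  · exact hPU.notMem_of_mem_left (hk.mul_div_cancel m ζ ▸ hm) hζ
  · exact (hk.notMem_annulus_and_norm_le hmn (hU ζ hζ)).1 (hP m _ hm)

end SeparatesScales

end Gluing

section Universality

lemma exists_forall_norm_mem_Icc {E : Type*} [SeminormedAddCommGroup E] {U : Set E}
    (hUb : IsBounded U) (h0 : 0 ∉ closure U) :
    ∃ r > 0, ∃ R, ∀ z ∈ closure U, ‖z‖ ∈ Icc r R := by
  obtain ⟨r, hr, hball⟩ := Metric.isOpen_iff.1 isClosed_closure.isOpen_compl 0 h0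
  obtain ⟨R, hR⟩ := hUb.closure.exists_norm_le
  refine ⟨r, hr, R, fun z hz => ⟨?_, hR z hz⟩⟩
  by_contra! hzr
  exact hball (mem_ball_zero_iff.2 hzr) hz

theorem exists_universal_scaling {U : Set ℂ} (hU : IsOpen U) (hUb : IsBounded U)
    (h0 : 0 ∉ closure U) :
    ∃ (Ω : Set ℂ) (k : ℕ → ℕ) (f : ℂ → ℂ), IsOpen Ω ∧ IsConnected Ω ∧ StrictMono k ∧
      (∀ n, 0 < k n) ∧ (∀ n, MapsTo (fun z => z / (k n : ℂ)) U Ω) ∧ DifferentiableOn ℂ f Ω ∧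
      UniversalFor U (fun n z => z / (k n : ℂ)) f := by
  obtain ⟨F, hF, F_dense⟩ := exists_seq_isScalingBlock_frequently hU hUb h0
  choose P P_finite P_subset F_holo using fun n => (hF n).exists_finite_differentiableOn_compl
  obtain ⟨r, hr, R, annulus⟩ := exists_forall_norm_mem_Icc hUb h0
  obtain ⟨k, hk⟩ := exists_separatesScales hr R (fun n => (hF n).tendsto_zero)
    fun n => (hF n).tendsto_cobounded
  have P_annulus (m : ℕ) (z : ℂ) (hz : z ∈ P m) : ‖z‖ ∈ Icc r R :=
    annulus z (frontier_subset_closure (P_subset m hz))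
  have P_closed (m : ℕ) : IsClosed (P m) := (P_finite m).isClosed
  have P_ball (m : ℕ) : P m ⊆ closedBall 0 R :=
    fun z hz => mem_closedBall_zero_iff.2 (P_annulus m z hz).2
  refine ⟨scaledDomain P k, k, scaledSum F k, hk.isOpen_scaledDomain P_closed P_ball,
    isConnected_scaledDomain (fun m => (P_finite m).countable) hk.pos, hk.strictMono, hk.pos,
    fun n => hk.mapsTo_scaledDomain hr P_annulus (fun z hz => annulus z (subset_closure hz))
      ((disjoint_frontier_iff_isOpen.2 hU).mono_left (P_subset n)),
    hk.differentiableOn_scaledSum P_closed P_ball F_holo, fun g hg K hKU hK ε hε => ?_⟩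
  have error_small : ∀ᶠ n : ℕ in atTop, 2 * (1 / 2 : ℝ) ^ n < ε / 2 :=
    ((tendsto_pow_atTop_nhds_zero_of_lt_one (by norm_num) (by norm_num)).const_mul 2
      ).eventually_lt_const (by linarith)
  obtain ⟨n, hFg, hn⟩ := ((F_dense g hg K hKU hK (ε / 2) (half_pos hε)).and_eventually
    error_small).exists
  refine ⟨n, fun z hz => ?_⟩
  have close := hk.norm_scaledSum_sub_le hr n (annulus z (subset_closure (hKU hz)))
  linarith [hFg z hz, norm_sub_le_norm_sub_add_norm_sub (scaledSum F k (z / k n)) (F n z) (g z)]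

lemma exists_zero_notMem_closure_add_image {E : Type*} [NormedAddCommGroup E] [NormedSpace ℝ E]
    [Nontrivial E] {G : Set E} (hGb : IsBounded G) :
    ∃ a : E, 0 ∉ closure ((fun z => z + a) '' G) := by
  obtain ⟨b, hb⟩ : (closure G)ᶜ.Nonempty :=
    nonempty_compl.2 fun h => NormedSpace.unbounded_univ ℝ E (h ▸ hGb.closure)
  refine ⟨-b, fun h => hb ?_⟩
  obtain ⟨z, hz, hzb⟩ := ((Homeomorph.addRight (-b)).image_closure G).ge h
  rwa [add_neg_eq_zero.1 hzb] at hz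

lemma UniversalFor.comp_add {G : Set ℂ} {φ : ℕ → ℂ → ℂ} {f : ℂ → ℂ} {a : ℂ}
    (h : UniversalFor ((fun z => z + a) '' G) φ f) : UniversalFor G (fun n z => φ n (z + a)) f := by
  intro g hg K hKG hK ε hε
  have hg' : DifferentiableOn ℂ (fun z => g (z - a)) ((fun z => z + a) '' G) := by
    refine hg.comp (differentiableOn_id.sub_const a) ?_
    rintro _ ⟨z, hz, rfl⟩
    simpa using hz
  obtain ⟨n, hn⟩ := h _ hg' _ (image_mono hKG) (hK.image (continuous_add_const a)) ε hε
  exact ⟨n, fun z hz => by simpa using hn _ (mem_image_of_mem _ hz)⟩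

theorem exists_universal_affine_sequence_general
    (G : Set ℂ) (hG : IsOpen G) (hGb : Bornology.IsBounded G) :
    ∃ (Ω : Set ℂ) (a : ℂ) (k : ℕ → ℕ),
      IsOpen Ω ∧ IsConnected Ω ∧ StrictMono k ∧ (∀ n, 0 < k n) ∧
      (∀ n, Set.MapsTo (fun z => (z + a) / (k n : ℂ)) G Ω) ∧
      (∀ n, Set.InjOn (fun z => (z + a) / (k n : ℂ)) G) ∧
      (∀ n, DifferentiableOn ℂ (fun z => (z + a) / (k n : ℂ)) G) ∧
      ∃ f : ℂ → ℂ, DifferentiableOn ℂ f Ω ∧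
        UniversalFor G (fun n z => (z + a) / (k n : ℂ)) f := by
  obtain ⟨a, ha⟩ := exists_zero_notMem_closure_add_image hGb
  have image_bounded : IsBounded ((fun z => z + a) '' G) :=
    (LipschitzWith.id.add (LipschitzWith.const a)).isBounded_image hGb
  obtain ⟨Ω, k, f, hΩ, hΩc, hk, k_pos, maps, hf, universal⟩ :=
    exists_universal_scaling ((Homeomorph.addRight a).isOpenMap G hG) image_bounded ha
  refine ⟨Ω, a, k, hΩ, hΩc, hk, k_pos, fun n => (maps n).comp (mapsTo_image _ G), fun n => ?_,
    fun n => (differentiableOn_id.add_const a).div_const _, f, hf, universal.comp_add⟩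
  have : (k n : ℂ) ≠ 0 := Nat.cast_ne_zero.2 (k_pos n).ne'
  exact fun z _ w _ hzw => add_right_cancel ((div_left_inj' this).1 hzw)

end Universality

/-- for any bounded domain `G` there are a domain `Ω`, a point `a` and a
strictly increasing sequence of positive integers `k` such that `φₙ(z) = (z+a)/kₙ` is a
universal sequence of injective holomorphic maps from `G` to `Ω`. -/
theorem exists_universal_affine_sequence
    (G : Set ℂ) (hG : IsOpen G) (hGconn : IsConnected G) (hGb : Bornology.IsBounded G) :
    ∃ (Ω : Set ℂ) (a : ℂ) (k : ℕ → ℕ),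
      IsOpen Ω ∧ IsConnected Ω ∧ StrictMono k ∧ (∀ n, 0 < k n) ∧
      (∀ n, Set.MapsTo (fun z => (z + a) / (k n : ℂ)) G Ω) ∧
      (∀ n, Set.InjOn (fun z => (z + a) / (k n : ℂ)) G) ∧
      (∀ n, DifferentiableOn ℂ (fun z => (z + a) / (k n : ℂ)) G) ∧
      ∃ f : ℂ → ℂ, DifferentiableOn ℂ f Ω ∧
        UniversalFor G (fun n z => (z + a) / (k n : ℂ)) f :=
  exists_universal_affine_sequence_general G hG hGb
end

section
/- Let G ⊆ ℂ be a closed set with empty interior, Ω ⊆ ℂ a domain, Φ = (φₙ) a sequence of continuous maps from G to Ω, and M a countable family of compact subsets of G. Then there exists a (Φ,M)-universal function if and only if for every ε > 0, every K ∈ M, every compact set L ⊆ Ω, every continuous function h on K and every g ∈ H(Ω), there exist f ∈ H(Ω) and n ∈ ℕ such that sup_{z∈K} |f(φₙ(z)) − h(z)| ≤ ε and sup_{z∈L} |f(z) − g(z)| ≤ ε. Moreover, the set of (Φ,M)-universal functions is either empty or a dense G_δ subset of H(Ω). -/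
open Set Metric Bornology Filter

/-- The space `H(Ω)` of holomorphic functions on `Ω`. -/
def HoloSpace (Ω : Set ℂ) : Type :=
  {f : ℂ → ℂ // DifferentiableOn ℂ f Ω}

/-- The topology of locally uniform convergence on `H(Ω)`, induced by the compact-open
topology on `C(Ω, ℂ)`. -/
noncomputable instance HoloSpace.instTopologicalSpace (Ω : Set ℂ) :
    TopologicalSpace (HoloSpace Ω) :=
  TopologicalSpace.induced
    (fun f : HoloSpace Ω => (⟨Ω.restrict f.1, f.2.continuousOn.restrict⟩ : C(Ω, ℂ)))
    inferInstance

/-!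
Existence implies the criterion: if `f` is universal and `c` is a constant that is large compared
with `f` on `L` and with `h` on `K`, some `f ∘ φ n` is close to `c + h` on `K`. Then `f / c` is
close to `0` on `L` and to `1` on `φ n '' K`, and composing it with a high iterate of the polynomial
`x² (3 - 2 x)`, which attracts to `0` near `0` and to `1` near `1`, yields a holomorphic function
that glues `f - c` on `φ n '' K`, where it is close to `h`, to an arbitrary `g` on `L`.

Conversely, the criterion says that for each `K ∈ M` the union of the graphs of the maps
`f ↦ (f ∘ φ n)|_K` is dense in `H(Ω) × C(K)`. As `C(K)` is separable and `H(Ω)` is a Baire space,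
the universal functions then form a countable intersection of dense open sets.
-/

open scoped Topology

section Gluing

/-- The polynomial `x² (3 - 2 x)`, with superattracting fixed points `0` and `1`; its iterates
approximate the function that is `0` near `0` and `1` near `1`. -/
def smoothstep (x : ℂ) : ℂ := x ^ 2 * (3 - 2 * x)

theorem differentiable_smoothstep : Differentiable ℂ smoothstep := by
  unfold smoothstep
  fun_prop

theorem semiconj_one_sub_smoothstep : Function.Semiconj (1 - ·) smoothstep smoothstep :=
  fun x => by simp only [smoothstep]; ring

theorem norm_smoothstep_le {x : ℂ} (hx : ‖x‖ ≤ 1 / 4) : ‖smoothstep x‖ ≤ 7 / 8 * ‖x‖ := by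
  have hfactor : ‖3 - 2 * x‖ ≤ 7 / 2 :=
    calc ‖3 - 2 * x‖ ≤ ‖(3 : ℂ)‖ + ‖2 * x‖ := norm_sub_le _ _
      _ = 3 + 2 * ‖x‖ := by simp
      _ ≤ 7 / 2 := by linarith
  calc ‖smoothstep x‖ = ‖x‖ * ‖x‖ * ‖3 - 2 * x‖ := by simp [smoothstep, pow_two]
    _ ≤ 1 / 4 * ‖x‖ * (7 / 2) := by gcongr
    _ = 7 / 8 * ‖x‖ := by ring

theorem norm_iterate_smoothstep_le (N : ℕ) {x : ℂ} (hx : ‖x‖ ≤ 1 / 4) :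
    ‖smoothstep^[N] x‖ ≤ (7 / 8) ^ N * ‖x‖ := by
  induction N generalizing x with
  | zero => simp
  | succ N ih =>
    have hstep := norm_smoothstep_le hx
    calc ‖smoothstep^[N] (smoothstep x)‖ ≤ (7 / 8) ^ N * ‖smoothstep x‖ :=
          ih (by linarith [norm_nonneg x])
      _ ≤ (7 / 8) ^ N * (7 / 8 * ‖x‖) := by gcongr
      _ = (7 / 8) ^ (N + 1) * ‖x‖ := by ring

theorem exists_differentiable_near_zero_near_one {ε : ℝ} (hε : 0 < ε) :
    ∃ s : ℂ → ℂ, Differentiable ℂ s ∧ (∀ x, ‖x‖ ≤ 1 / 4 → ‖s x‖ ≤ ε) ∧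
      ∀ x, ‖1 - x‖ ≤ 1 / 4 → ‖1 - s x‖ ≤ ε := by
  obtain ⟨N, hN⟩ := exists_pow_lt_of_lt_one hε (show (7 / 8 : ℝ) < 1 by norm_num)
  have hzero (x : ℂ) (hx : ‖x‖ ≤ 1 / 4) : ‖smoothstep^[N] x‖ ≤ ε :=
    calc ‖smoothstep^[N] x‖ ≤ (7 / 8) ^ N * ‖x‖ := norm_iterate_smoothstep_le N hx
      _ ≤ (7 / 8) ^ N * 1 := by gcongr; linarith
      _ ≤ ε := by linarith
  refine ⟨smoothstep^[N], differentiable_smoothstep.iterate N, hzero, fun x hx => ?_⟩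
  have hsymm : 1 - smoothstep^[N] x = smoothstep^[N] (1 - x) :=
    semiconj_one_sub_smoothstep.iterate_right N x
  rw [hsymm]
  exact hzero _ hx

theorem exists_differentiableOn_glue {E F : Type*} [NormedAddCommGroup E] [NormedSpace ℂ E]
    [NormedAddCommGroup F] [NormedSpace ℂ F] {U K L : Set E} (hK : IsCompact K) (hKU : K ⊆ U)
    (hL : IsCompact L) (hLU : L ⊆ U) {a : E → ℂ} (ha : DifferentiableOn ℂ a U)
    (haK : ∀ z ∈ K, ‖1 - a z‖ ≤ 1 / 4) (haL : ∀ z ∈ L, ‖a z‖ ≤ 1 / 4) {f g : E → F}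
    (hf : DifferentiableOn ℂ f U) (hg : DifferentiableOn ℂ g U) {ε : ℝ} (hε : 0 < ε) :
    ∃ u : E → F, DifferentiableOn ℂ u U ∧
      (∀ z ∈ K, ‖u z - f z‖ ≤ ε) ∧ ∀ z ∈ L, ‖u z - g z‖ ≤ ε := by
  obtain ⟨C, hC⟩ := (hK.union hL).exists_bound_of_continuousOn
    ((hf.sub hg).continuousOn.mono (union_subset hKU hLU))
  obtain ⟨s, hs, hs_zero, hs_one⟩ :=
    exists_differentiable_near_zero_near_one (show 0 < ε / (|C| + 1) by positivity)
  have herror (t : ℂ) (ht : ‖t‖ ≤ ε / (|C| + 1)) (z : E) (hz : z ∈ K ∪ L) :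
      ‖t • (f z - g z)‖ ≤ ε :=
    calc ‖t • (f z - g z)‖ = ‖t‖ * ‖f z - g z‖ := norm_smul _ _
      _ ≤ ε / (|C| + 1) * (|C| + 1) := by
        gcongr
        exact (hC z hz).trans ((le_abs_self C).trans (by linarith))
      _ = ε := by field_simp
  refine ⟨fun z => g z + s (a z) • (f z - g z),
    hg.add ((hs.comp_differentiableOn ha).smul (hf.sub hg)), fun z hz => ?_, fun z hz => ?_⟩
  · have hsub : g z + s (a z) • (f z - g z) - f z = -((1 - s (a z)) • (f z - g z)) := by module
    rw [hsub, norm_neg]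
    exact herror _ (hs_one _ (haK z hz)) z (.inl hz)
  · rw [add_sub_cancel_left]
    exact herror _ (hs_zero _ (haL z hz)) z (.inr hz)

end Gluing

/-- The criterion for the existence of universal functions: functions `g ∈ H(Ω)` on compact subsets
of `Ω` and continuous functions `h` on members `K` of `M` can be approximated simultaneously by
`f ∈ H(Ω)` and some `f ∘ φ n`, respectively. -/
def UniversalityCriterion (Ω : Set ℂ) (M : Set (Set ℂ)) (φ : ℕ → ℂ → ℂ) : Prop :=
  ∀ ε : ℝ, 0 < ε → ∀ K ∈ M, ∀ L : Set ℂ, L ⊆ Ω → IsCompact L →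
    ∀ h : ℂ → ℂ, ContinuousOn h K → ∀ g : ℂ → ℂ, DifferentiableOn ℂ g Ω →
      ∃ f : ℂ → ℂ, DifferentiableOn ℂ f Ω ∧ ∃ n : ℕ,
        (∀ z ∈ K, ‖f (φ n z) - h z‖ ≤ ε) ∧ ∀ z ∈ L, ‖f z - g z‖ ≤ ε

theorem MUniversal.universalityCriterion {Ω : Set ℂ} {M : Set (Set ℂ)} {φ : ℕ → ℂ → ℂ}
    (hM : ∀ K ∈ M, IsCompact K) (hφc : ∀ K ∈ M, ∀ n, ContinuousOn (φ n) K)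
    (hφm : ∀ K ∈ M, ∀ n, MapsTo (φ n) K Ω) {f : ℂ → ℂ} (hf : DifferentiableOn ℂ f Ω)
    (hu : MUniversal M φ f) : UniversalityCriterion Ω M φ := by
  intro ε hε K hK L hLΩ hL h hh g hg
  obtain ⟨B, hB⟩ := (hM K hK).exists_bound_of_continuousOn hh
  obtain ⟨R, hR⟩ := hL.exists_bound_of_continuousOn (hf.continuousOn.mono hLΩ)
  let c : ℝ := 4 * (|R| + |B| + ε)
  have hc : 0 < c := by positivity
  have hc_ne : (c : ℂ) ≠ 0 := by exact_mod_cast hc.ne'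
  have hnorm_div (w : ℂ) : ‖w / c‖ = ‖w‖ / c := by
    rw [norm_div, Complex.norm_of_nonneg hc.le]
  obtain ⟨n, hn⟩ := hu K hK (fun z => c + h z) (by fun_prop) (ε / 2) (by positivity)
  have happrox (z : ℂ) (hz : z ∈ K) : ‖(f (φ n z) - c) - h z‖ ≤ ε / 2 := by
    rw [sub_sub]
    exact (hn z hz).le
  have hK_one : ∀ w ∈ φ n '' K, ‖1 - f w / c‖ ≤ 1 / 4 := by
    rintro _ ⟨z, hz, rfl⟩
    rw [one_sub_div hc_ne, hnorm_div, norm_sub_rev, div_le_iff₀ hc]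
    linarith [norm_le_norm_add_norm_sub' (f (φ n z) - c) (h z), happrox z hz, hB z hz,
      le_abs_self B, abs_nonneg R]
  have hL_zero (z : ℂ) (hz : z ∈ L) : ‖f z / c‖ ≤ 1 / 4 := by
    rw [hnorm_div, div_le_iff₀ hc]
    linarith [hR z hz, le_abs_self R, abs_nonneg B]
  obtain ⟨u, hu, huK, huL⟩ := exists_differentiableOn_glue ((hM K hK).image_of_continuousOn
    (hφc K hK n)) (hφm K hK n).image_subset hL hLΩ (hf.div_const _) hK_one hL_zero
    (hf.sub_const (c : ℂ)) hg (half_pos hε)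
  refine ⟨u, hu, n, fun z hz => ?_, fun z hz => (huL z hz).trans (by linarith)⟩
  linarith [norm_sub_le_norm_sub_add_norm_sub (u (φ n z)) (f (φ n z) - c) (h z),
    huK _ (mem_image_of_mem _ hz), happrox z hz]

section DenseOrbits

open TopologicalSpace

variable {ι X Y : Type*} [TopologicalSpace Y] [SecondCountableTopology Y]

theorem setOf_denseRange_eq_iInter (T : ι → X → Y) :
    {x | DenseRange (T · x)} = ⋂ V : countableBasis Y, ⋃ i, T i ⁻¹' V := by
  ext x
  simp only [mem_ofPred_eq, mem_iInter, mem_iUnion, mem_preimage, Subtype.forall]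
  refine ⟨fun hx V hV => hx.exists_mem_open (isOpen_of_mem_countableBasis hV)
    (nonempty_of_mem_countableBasis hV), fun hx => ?_⟩
  refine (isBasis_countableBasis Y).dense_iff.2 fun V hV _ => ?_
  obtain ⟨i, hi⟩ := hx V hV
  exact ⟨T i x, hi, mem_range_self i⟩

variable [TopologicalSpace X] {T : ι → X → Y}

theorem isOpen_iUnion_preimage_countableBasis (hT : ∀ i, Continuous (T i))
    (V : countableBasis Y) : IsOpen (⋃ i, T i ⁻¹' V) :=
  isOpen_iUnion fun i => (isOpen_of_mem_countableBasis V.2).preimage (hT i)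

theorem isGδ_setOf_denseRange (hT : ∀ i, Continuous (T i)) : IsGδ {x | DenseRange (T · x)} := by
  rw [setOf_denseRange_eq_iInter]
  exact .iInter_of_isOpen (isOpen_iUnion_preimage_countableBasis hT)

theorem dense_setOf_denseRange [BaireSpace X] (hT : ∀ i, Continuous (T i))
    (hgraph : DenseRange fun p : ι × X => (p.2, T p.1 p.2)) :
    Dense {x | DenseRange (T · x)} := by
  rw [setOf_denseRange_eq_iInter]
  refine dense_iInter_of_isOpen (isOpen_iUnion_preimage_countableBasis hT) fun V => ?_
  refine dense_iff_inter_open.2 fun U hU hU_ne => ?_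
  obtain ⟨⟨i, x⟩, hxU, hxV⟩ := hgraph.exists_mem_open
    (hU.prod (isOpen_of_mem_countableBasis V.2))
    (hU_ne.prod (nonempty_of_mem_countableBasis V.2))
  exact ⟨x, hxU, mem_iUnion.2 ⟨i, hxV⟩⟩

end DenseOrbits

theorem isCompletelyPseudoMetrizableSpace_of_isInducing {X Y : Type*} [TopologicalSpace X]
    [TopologicalSpace Y] [TopologicalSpace.IsCompletelyPseudoMetrizableSpace Y] {f : X → Y}
    (hf : Topology.IsInducing f) (hrange : IsClosed (range f)) :
    TopologicalSpace.IsCompletelyPseudoMetrizableSpace X := by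
  let _ := TopologicalSpace.upgradeIsCompletelyPseudoMetrizable Y
  let _ : PseudoMetricSpace X := hf.comapPseudoMetricSpace
  have hisometry : Isometry f := fun _ _ => rfl
  have : CompleteSpace X := hisometry.isUniformInducing.completeSpace hrange.isComplete
  infer_instance

namespace HoloSpace

variable {Ω : Set ℂ}

/-- Restriction to `Ω` as a map `H(Ω) → C(Ω, ℂ)`. It is inducing, but for `Ω ≠ ℂ` not injective:
elements of `HoloSpace Ω` are functions on all of `ℂ`, with arbitrary values off `Ω`. -/
def toContinuousMap (f : HoloSpace Ω) : C(Ω, ℂ) :=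
  ⟨Ω.domRestrict f.1, f.2.continuousOn.domRestrict⟩

theorem isInducing_toContinuousMap :
    Topology.IsInducing (toContinuousMap : HoloSpace Ω → C(Ω, ℂ)) := ⟨rfl⟩

theorem isClosed_range_toContinuousMap (hΩ : IsOpen Ω) :
    IsClosed (range (toContinuousMap : HoloSpace Ω → C(Ω, ℂ))) := by
  have := hΩ.locallyCompactSpace
  refine IsSeqClosed.isClosed fun F u hF hu => ?_
  choose f hf using hF
  obtain rfl : (fun k => (f k).toContinuousMap) = F := funext hf
  rw [ContinuousMap.tendsto_iff_tendstoLocallyUniformly] at hu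
  let v : ℂ → ℂ := Function.extend (↑) u 0
  have hv (z : Ω) : v z = u z := Subtype.val_injective.extend_apply _ _ z
  have hlim : TendstoLocallyUniformlyOn (fun k => (f k).1) v atTop Ω := by
    rw [tendstoLocallyUniformlyOn_iff_tendstoLocallyUniformly_comp_coe,
      show v ∘ (↑) = u from funext hv]
    exact hu
  exact ⟨⟨v, hlim.differentiableOn (.of_forall fun k => (f k).2) hΩ⟩, ContinuousMap.ext hv⟩

theorem baireSpace (hΩ : IsOpen Ω) : BaireSpace (HoloSpace Ω) := by
  have := hΩ.locallyCompactSpace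
  have := isCompletelyPseudoMetrizableSpace_of_isInducing isInducing_toContinuousMap
    (isClosed_range_toContinuousMap hΩ)
  infer_instance

theorem hasBasis_nhds (g : HoloSpace Ω) :
    (𝓝 g).HasBasis (fun p : Set Ω × ℝ => IsCompact p.1 ∧ 0 < p.2)
      fun p => {f | ∀ z ∈ p.1, ‖f.1 z - g.1 z‖ ≤ p.2} := by
  have hbasis := isInducing_toContinuousMap.basis_nhds
    (nhds_basis_uniformity uniformity_basis_dist_le.compactConvergenceUniformity
      (x := g.toContinuousMap))
  simp only [dist_eq_norm] at hbasis
  exact hbasis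

/-- The map `f ↦ (f ∘ ψ)|_K` from `H(Ω)` to `C(K)`. -/
noncomputable def compRestrict {K : Set ℂ} {ψ : ℂ → ℂ} (hc : ContinuousOn ψ K) (hm : MapsTo ψ K Ω)
    (f : HoloSpace Ω) : C(K, ℂ) :=
  f.toContinuousMap.comp ⟨hm.restrict, hc.mapsToRestrict hm⟩

theorem continuous_compRestrict {K : Set ℂ} {ψ : ℂ → ℂ} (hc : ContinuousOn ψ K)
    (hm : MapsTo ψ K Ω) : Continuous (compRestrict hc hm) :=
  (ContinuousMap.continuous_precomp _).comp isInducing_toContinuousMap.continuous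

theorem denseRange_compRestrict_iff {ι : Type*} {K : Set ℂ} (hK : IsCompact K) {φ : ι → ℂ → ℂ}
    (hc : ∀ i, ContinuousOn (φ i) K) (hm : ∀ i, MapsTo (φ i) K Ω) (f : HoloSpace Ω) :
    DenseRange (fun i => compRestrict (hc i) (hm i) f) ↔
      ∀ h : ℂ → ℂ, ContinuousOn h K → ∀ ε : ℝ, 0 < ε →
        ∃ i, ∀ z ∈ K, ‖f.1 (φ i z) - h z‖ < ε := by
  have := isCompact_iff_compactSpace.1 hK
  rw [Metric.denseRange_iff]
  constructor
  · intro hdense h hh ε hε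
    obtain ⟨i, hi⟩ := hdense ⟨_, hh.domRestrict⟩ ε hε
    rw [dist_comm, ContinuousMap.dist_lt_iff hε] at hi
    exact ⟨i, fun z hz => (dist_eq_norm (f.1 (φ i z)) (h z)).symm.trans_lt (hi ⟨z, hz⟩)⟩
  · intro happrox u ε hε
    obtain ⟨h, rfl⟩ := u.exists_restrict_eq hK.isClosed
    obtain ⟨i, hi⟩ := happrox h h.continuous.continuousOn ε hε
    refine ⟨i, ?_⟩
    rw [dist_comm, ContinuousMap.dist_lt_iff hε]
    exact fun z => (dist_eq_norm (f.1 (φ i z)) (h z)).trans_lt (hi z z.2)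

end HoloSpace

section Universal

variable {Ω : Set ℂ} {M : Set (Set ℂ)} {φ : ℕ → ℂ → ℂ}

theorem UniversalityCriterion.denseRange_graph (hcrit : UniversalityCriterion Ω M φ) {K : Set ℂ}
    (hKM : K ∈ M) (hK : IsCompact K) (hc : ∀ n, ContinuousOn (φ n) K)
    (hm : ∀ n, MapsTo (φ n) K Ω) :
    DenseRange fun p : ℕ × HoloSpace Ω =>
      (p.2, HoloSpace.compRestrict (hc p.1) (hm p.1) p.2) := by
  have := isCompact_iff_compactSpace.1 hK
  rintro ⟨g, u⟩
  obtain ⟨h, rfl⟩ := u.exists_restrict_eq hK.isClosed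
  rw [mem_closure_iff_nhds_basis (g.hasBasis_nhds.prod_nhds nhds_basis_closedBall)]
  rintro ⟨⟨L, ε⟩, δ⟩ ⟨⟨hL, hε⟩, hδ⟩
  obtain ⟨f, hf, n, hfK, hfL⟩ := hcrit (min ε δ) (lt_min hε hδ) K hKM ((↑) '' L)
    (Subtype.coe_image_subset Ω L) (hL.image continuous_subtype_val) h h.continuous.continuousOn
    g.1 g.2
  refine ⟨_, mem_range_self (n, (⟨f, hf⟩ : HoloSpace Ω)), fun z hz => ?_, ?_⟩
  · exact (hfL z (mem_image_of_mem _ hz)).trans (min_le_left _ _)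
  · refine (ContinuousMap.dist_le hδ.le).2 fun z => ?_
    exact (dist_eq_norm (f (φ n z)) (h z)).trans_le ((hfK z z.2).trans (min_le_right _ _))

variable (hM : ∀ K ∈ M, IsCompact K) (hφc : ∀ K ∈ M, ∀ n, ContinuousOn (φ n) K)
  (hφm : ∀ K ∈ M, ∀ n, MapsTo (φ n) K Ω)
include hM

theorem setOf_mUniversal_eq_iInter :
    {f : HoloSpace Ω | MUniversal M φ f.1} =
      ⋂ K : M, {f | DenseRange fun n =>
        HoloSpace.compRestrict (hφc K K.2 n) (hφm K K.2 n) f} := by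
  ext f
  simp only [mem_iInter, mem_ofPred_eq, Subtype.forall]
  exact forall₂_congr fun K hK =>
    (f.denseRange_compRestrict_iff (hM K hK) (hφc K hK) (hφm K hK)).symm

include hφc hφm

theorem isGδ_setOf_mUniversal (hMc : M.Countable) :
    IsGδ {f : HoloSpace Ω | MUniversal M φ f.1} := by
  have := hMc.to_subtype
  rw [setOf_mUniversal_eq_iInter hM hφc hφm]
  refine .iInter fun K => ?_
  have := isCompact_iff_compactSpace.1 (hM K K.2)
  exact isGδ_setOf_denseRange fun n => HoloSpace.continuous_compRestrict _ _

theorem UniversalityCriterion.dense_setOf_mUniversal (hΩ : IsOpen Ω) (hMc : M.Countable)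
    (hcrit : UniversalityCriterion Ω M φ) : Dense {f : HoloSpace Ω | MUniversal M φ f.1} := by
  have := hMc.to_subtype
  have := HoloSpace.baireSpace hΩ
  rw [setOf_mUniversal_eq_iInter hM hφc hφm]
  refine dense_iInter_of_Gδ (fun K => ?_) fun K => ?_ <;>
    have := isCompact_iff_compactSpace.1 (hM K K.2)
  · exact isGδ_setOf_denseRange fun n => HoloSpace.continuous_compRestrict _ _
  · exact dense_setOf_denseRange (fun n => HoloSpace.continuous_compRestrict _ _)
      (hcrit.denseRange_graph K.2 (hM K K.2) (hφc K K.2) (hφm K K.2))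

end Universal

theorem mUniversal_iff_criterion_and_gdelta_general {Ω : Set ℂ} (hΩ : IsOpen Ω)
    {M : Set (Set ℂ)} (hMc : M.Countable) (hM : ∀ K ∈ M, IsCompact K) {φ : ℕ → ℂ → ℂ}
    (hφc : ∀ K ∈ M, ∀ n, ContinuousOn (φ n) K) (hφm : ∀ K ∈ M, ∀ n, MapsTo (φ n) K Ω) :
    ((∃ f : ℂ → ℂ, DifferentiableOn ℂ f Ω ∧ MUniversal M φ f) ↔ UniversalityCriterion Ω M φ) ∧
      ({f : HoloSpace Ω | MUniversal M φ f.1} = ∅ ∨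
        (IsGδ {f : HoloSpace Ω | MUniversal M φ f.1} ∧
          Dense {f : HoloSpace Ω | MUniversal M φ f.1})) := by
  have hdense (hcrit : UniversalityCriterion Ω M φ) :
      Dense {f : HoloSpace Ω | MUniversal M φ f.1} :=
    hcrit.dense_setOf_mUniversal hM hφc hφm hΩ hMc
  refine ⟨⟨fun ⟨f, hf, hu⟩ => hu.universalityCriterion hM hφc hφm hf, fun hcrit => ?_⟩, ?_⟩
  · have : Nonempty (HoloSpace Ω) := ⟨⟨0, differentiableOn_const 0⟩⟩
    obtain ⟨f, hu⟩ := (hdense hcrit).nonempty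
    exact ⟨f.1, f.2, hu⟩
  · rcases eq_empty_or_nonempty {f : HoloSpace Ω | MUniversal M φ f.1} with hempty | ⟨f, hu⟩
    · exact .inl hempty
    · exact .inr ⟨isGδ_setOf_mUniversal hM hφc hφm hMc,
        hdense (MUniversal.universalityCriterion hM hφc hφm f.2 hu)⟩

/-- Fact `Birk-G-empty`. -/
theorem mUniversal_iff_criterion_and_gdelta
    (G : Set ℂ) (hGcl : IsClosed G) (hGint : interior G = ∅)
    (Ω : Set ℂ) (hΩ : IsOpen Ω) (hΩconn : IsConnected Ω)
    (φ : ℕ → ℂ → ℂ) (hφc : ∀ n, ContinuousOn (φ n) G) (hφm : ∀ n, Set.MapsTo (φ n) G Ω)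
    (M : Set (Set ℂ)) (hMc : M.Countable) (hM : ∀ K ∈ M, K ⊆ G ∧ IsCompact K) :
    ((∃ f : ℂ → ℂ, DifferentiableOn ℂ f Ω ∧ MUniversal M φ f) ↔
      (∀ ε : ℝ, 0 < ε → ∀ K ∈ M, ∀ L : Set ℂ, L ⊆ Ω → IsCompact L →
        ∀ h : ℂ → ℂ, ContinuousOn h K → ∀ g : ℂ → ℂ, DifferentiableOn ℂ g Ω →
          ∃ f : ℂ → ℂ, DifferentiableOn ℂ f Ω ∧ ∃ n : ℕ,
            (∀ z ∈ K, ‖f (φ n z) - h z‖ ≤ ε) ∧ ∀ z ∈ L, ‖f z - g z‖ ≤ ε)) ∧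
    ({f : HoloSpace Ω | MUniversal M φ f.1} = ∅ ∨
      (IsGδ {f : HoloSpace Ω | MUniversal M φ f.1} ∧
        Dense {f : HoloSpace Ω | MUniversal M φ f.1})) :=
  mUniversal_iff_criterion_and_gdelta_general hΩ hMc (fun K hK => (hM K hK).2)
    (fun K hK n => (hφc n).mono (hM K hK).1) fun K hK n => (hφm n).mono_left (hM K hK).1
end
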